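/- arXiv:1509.01870 — 3 statements merged into one kernel-verified Lean document; each statement's English description precedes it below -/
import Mathlib

section
/- If a discrete group G has only countably many amenable subgroups and has no normal amenable subgroups other than the trivial subgroup {e}, then G is C*-simple. -/
noncomputable section
open scoped ENNReal ComplexOrder lp
open MeasureTheory
set_option maxHeartbeats 1000000
set_option synthInstance.maxHeartbeats 1000000

universe u

variable {G : Type u} [Group G]

theorem translat_mem (g : G) (f : ℓ²(G, ℂ)) : Memℓp (fun h => f (g⁻¹ * h)) 2 := by
  have hf : Summable fun i : G => ‖f i‖ ^ (2 : ℝ≥0∞).toReal :=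
    (memℓp_gen_iff (by norm_num)).1 (lp.memℓp f)
  exact memℓp_gen ((Equiv.mulLeft g⁻¹).summable_iff.2 hf)

/-- The left regular representation of `g ∈ G` as a linear isometric bijection of `ℓ²(G)`,
given by `(λ_g ξ)(h) = ξ(g⁻¹ h)`. -/
def lregE (g : G) : ℓ²(G, ℂ) ≃ₗᵢ[ℂ] ℓ²(G, ℂ) :=
{ toFun := fun f => ⟨fun h => f (g⁻¹ * h), translat_mem g f⟩
  invFun := fun f => ⟨fun h => f (g * h), by
    have := translat_mem g⁻¹ f; simp only [inv_inv] at this; exact this⟩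
  map_add' := by intro f₁ f₂; ext h; simp [lp.coeFn_add]; rfl
  map_smul' := by intro c f; ext h; simp [lp.coeFn_smul]
  left_inv := by intro f; ext h; simp
  right_inv := by intro f; ext h; simp
  norm_map' := by
    intro f
    rw [lp.norm_eq_tsum_rpow (by norm_num) f, lp.norm_eq_tsum_rpow (by norm_num)]
    congr 1
    exact (Equiv.mulLeft g⁻¹).tsum_eq (fun h => ‖f h‖ ^ (2 : ℝ≥0∞).toReal) }

/-- The left regular representation `λ` as bounded operators on `ℓ²(G)`. -/
def lreg (g : G) : ℓ²(G, ℂ) →L[ℂ] ℓ²(G, ℂ) :=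
  (lregE g).toContinuousLinearEquiv.toContinuousLinearMap

variable (G) in
/-- The reduced group C*-algebra `C*_λ(G)`: the norm-closed star subalgebra of the algebra of
bounded operators on `ℓ²(G)` generated by the image of the left regular representation. -/
def redCstar : StarSubalgebra ℂ (ℓ²(G, ℂ) →L[ℂ] ℓ²(G, ℂ)) :=
  (StarAlgebra.adjoin ℂ (Set.range (lreg (G := G)))).topologicalClosure

variable (G) in
/-- `G` is C*-simple: `C*_λ(G)` has no closed two-sided ideals other than `{0}` and the
whole algebra. -/
def IsCstarSimple : Prop :=
  ∀ I : TwoSidedIdeal (redCstar G), IsClosed (I : Set (redCstar G)) → I = ⊥ ∨ I = ⊤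

attribute [irreducible] redCstar lreg lregE

/-- Left translation of a bounded function on a group `H`. -/
def translInfty {H : Type*} [Group H] (h : H) (f : lp (fun _ : H => ℝ) ∞) :
    lp (fun _ : H => ℝ) ∞ :=
  ⟨fun k => f (h⁻¹ * k), by
    apply memℓp_infty
    have : (Set.range fun k => ‖f (h⁻¹ * k)‖) = Set.range fun k => ‖f k‖ :=
      (Equiv.mulLeft h⁻¹).surjective.range_comp (fun k => ‖f k‖)
    rw [this]
    exact memℓp_infty_iff.1 (lp.memℓp f)⟩

/-- A group `H` is amenable: there exists a left-invariant mean on `ℓ∞(H)`, i.e. a unital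
positive linear functional invariant under left translation. -/
def IsAmenable (H : Type*) [Group H] : Prop :=
  ∃ m : lp (fun _ : H => ℝ) ∞ →ₗ[ℝ] ℝ,
    m 1 = 1 ∧ (∀ f : lp (fun _ : H => ℝ) ∞, (∀ k, 0 ≤ f k) → 0 ≤ m f) ∧
      ∀ (h : H) (f : lp (fun _ : H => ℝ) ∞), m (translInfty h f) = m f


section States

variable {B : Type*} [CStarAlgebra B]

instance weakDual_tower : IsScalarTower ℝ ℂ (WeakDual ℂ B) :=
  ⟨fun r c φ => by
    apply DFunLike.ext; intro a
    change ((r • c) • φ a : ℂ) = r • (c • φ a)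
    rw [smul_assoc]⟩

instance weakDual_lc : LocallyConvexSpace ℝ (WeakDual ℂ B) := by
  exact WeakBilin.locallyConvexSpace (𝕜 := ℂ) (B := topDualPairing ℂ B)

variable [PartialOrder B] [StarOrderedRing B]

/-- States of a unital C*-algebra. -/
def IsState (φ : WeakDual ℂ B) : Prop := φ 1 = 1 ∧ ∀ a, 0 ≤ a → 0 ≤ φ a

namespace IsState

variable {φ : WeakDual ℂ B}

/-- The positive linear map underlying a state. -/
def pos (h : IsState φ) : B →ₚ[ℂ] ℂ := PositiveLinearMap.mk₀ (φ : B →ₗ[ℂ] ℂ) h.2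

theorem pos_apply (h : IsState φ) (a : B) : h.pos a = φ a := rfl

theorem map_star (h : IsState φ) (a : B) : φ (star a) = star (φ a) := by
  simpa [pos_apply] using StarHomClass.map_star h.pos a

theorem cs (h : IsState φ) (a b : B) :
    ‖φ (star a * b)‖ ^ 2 ≤ (φ (star a * a)).re * (φ (star b * b)).re := by
  have h1 := norm_inner_le_norm (𝕜 := ℂ) (h.pos.toPreGNS a) (h.pos.toPreGNS b)
  rw [PositiveLinearMap.preGNS_inner_def, PositiveLinearMap.preGNS_norm_def,
    PositiveLinearMap.preGNS_norm_def] at h1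
  simp only [PositiveLinearMap.ofPreGNS_toPreGNS, pos_apply] at h1
  have h2 : ‖φ (star a * b)‖ ^ 2 ≤ (√(φ (star a * a)).re * √(φ (star b * b)).re) ^ 2 := by
    gcongr
  rwa [mul_pow, Real.sq_sqrt, Real.sq_sqrt] at h2
  · exact (Complex.nonneg_iff.1 (h.2 _ (star_mul_self_nonneg b))).1
  · exact (Complex.nonneg_iff.1 (h.2 _ (star_mul_self_nonneg a))).1

theorem norm_le (h : IsState φ) (a : B) : ‖φ a‖ ≤ ‖a‖ := by
  have h1 := h.cs 1 a
  simp only [star_one, one_mul, h.1, Complex.one_re] at h1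
  have h2 : star a * a ≤ algebraMap ℝ B (‖a‖ ^ 2) := CStarAlgebra.star_mul_le_algebraMap_norm_sq
  have h3 := h.2 _ (sub_nonneg.2 h2)
  have h4 : algebraMap ℝ B (‖a‖ ^ 2) = ((‖a‖ ^ 2 : ℝ) : ℂ) • (1 : B) := by
    rw [Algebra.algebraMap_eq_smul_one, Complex.coe_smul]
  rw [map_sub, h4, map_smul, h.1] at h3
  have h5 := (Complex.nonneg_iff.1 h3).1
  simp only [Complex.sub_re, smul_eq_mul, mul_one, Complex.ofReal_re] at h5
  have : ‖φ a‖ ^ 2 ≤ ‖a‖ ^ 2 := by linarith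
  exact (sq_le_sq₀ (norm_nonneg _) (norm_nonneg _)).1 this

theorem mul_eq_zero_of (h : IsState φ) {T : B} (hT : IsSelfAdjoint T) (h0 : φ (T * T) = 0)
    (b : B) : φ (T * b) = 0 ∧ φ (b * T) = 0 := by
  have key : ∀ c, φ (T * c) = 0 := by
    intro c
    have h1 := h.cs T c
    rw [hT.star_eq, h0, Complex.zero_re, zero_mul] at h1
    have : ‖φ (T * c)‖ = 0 := by
      have := sq_nonneg ‖φ (T * c)‖
      exact pow_eq_zero_iff (two_ne_zero) |>.1 (le_antisymm h1 this)
    exact norm_eq_zero.1 this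
  refine ⟨key b, ?_⟩
  have h2 := h.map_star (b * T)
  rw [star_mul, hT.star_eq, key] at h2
  exact star_eq_zero.1 h2.symm

end IsState

theorem isState_of_norm_le (φ : WeakDual ℂ B) (h1 : φ 1 = 1) (hn : ∀ a, ‖φ a‖ ≤ ‖a‖) :
    IsState φ := by
  refine ⟨h1, fun a ha => ?_⟩
  have hsa : IsSelfAdjoint a := IsSelfAdjoint.of_nonneg ha
  have him : (φ a).im = 0 := by
    by_contra hne
    -- use the trick with `a + i t`
    have key : ∀ t : ℝ, ((φ a).im + t) ^ 2 ≤ ‖a‖ ^ 2 + t ^ 2 := by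
      intro t
      have e1 : φ (a + (Complex.I * t) • (1 : B)) = φ a + Complex.I * t := by
        rw [map_add, map_smul, h1]; simp
      have e2 : ‖a + (Complex.I * t) • (1 : B)‖ ^ 2 ≤ ‖a‖ ^ 2 + t ^ 2 := by
        rw [sq, ← CStarRing.norm_star_mul_self]
        have : star (a + (Complex.I * t) • (1 : B)) * (a + (Complex.I * t) • (1 : B))
            = a * a + ((t ^ 2 : ℝ) : ℂ) • (1 : B) := by
          rw [star_add, star_smul, hsa.star_eq, star_one]
          simp only [add_mul, mul_add, smul_mul_assoc, mul_smul_comm, one_mul, mul_one]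
          have : star (Complex.I * (t : ℂ)) = - (Complex.I * t) := by simp
          rw [this]
          have h2 : (Complex.I * (t : ℂ)) * -(Complex.I * t) = ((t ^ 2 : ℝ) : ℂ) := by
            push_cast
            linear_combination (-(t : ℂ) ^ 2) * Complex.I_sq
          rw [smul_add, smul_smul, h2]
          simp only [neg_smul]
          abel
        rw [this]
        refine (norm_add_le _ _).trans ?_
        have n1 : ‖a * a‖ ≤ ‖a‖ ^ 2 := by rw [sq]; exact norm_mul_le a a
        have n2 : ‖((t ^ 2 : ℝ) : ℂ) • (1 : B)‖ ≤ t ^ 2 := by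
          rw [norm_smul, Complex.norm_real, Real.norm_of_nonneg (sq_nonneg t)]
          have : ‖(1 : B)‖ ≤ 1 := by
            rcases subsingleton_or_nontrivial B with hB | hB
            · rw [Subsingleton.elim (1 : B) 0]; simp
            · simp
          nlinarith [sq_nonneg t]
        linarith
      have e3 := hn (a + (Complex.I * t) • (1 : B))
      rw [e1] at e3
      have e4 : |(φ a + Complex.I * t).im| ≤ ‖φ a + Complex.I * t‖ := Complex.abs_im_le_norm _
      have e5 : (φ a + Complex.I * t).im = (φ a).im + t := by simp
      rw [e5] at e4
      have e6 : |(φ a).im + t| ^ 2 ≤ ‖a + (Complex.I * t) • (1 : B)‖ ^ 2 := by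
        gcongr; exact e4.trans e3
      rw [sq_abs] at e6
      linarith
    have := key ((‖a‖ ^ 2 + 1) / (φ a).im)
    have hx : (φ a).im * ((‖a‖ ^ 2 + 1) / (φ a).im) = ‖a‖ ^ 2 + 1 := by field_simp
    nlinarith [sq_nonneg (φ a).im, sq_nonneg ‖a‖]
  rw [Complex.nonneg_iff]
  refine ⟨?_, him.symm⟩
  -- positivity of real part
  have hb : ‖algebraMap ℝ B ‖a‖ - a‖ ≤ ‖a‖ := by
    have h0 : 0 ≤ algebraMap ℝ B ‖a‖ - a := sub_nonneg.2 (IsSelfAdjoint.le_algebraMap_norm_self hsa)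
    rw [CStarAlgebra.norm_le_iff_le_algebraMap _ (norm_nonneg a) h0]
    exact sub_le_self _ ha
  have h4 : algebraMap ℝ B ‖a‖ = ((‖a‖ : ℝ) : ℂ) • (1 : B) := by
    rw [Algebra.algebraMap_eq_smul_one, Complex.coe_smul]
  have h5 := (hn _).trans hb
  rw [map_sub, h4, map_smul, h1] at h5
  have h6 := (Complex.abs_re_le_norm _).trans h5
  simp only [smul_eq_mul, mul_one, Complex.sub_re, Complex.ofReal_re] at h6
  have := (abs_le.1 h6).2
  linarith

theorem isClosed_isState : IsClosed {φ : WeakDual ℂ B | IsState φ} := by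
  have : {φ : WeakDual ℂ B | IsState φ} =
      {φ | φ 1 = 1} ∩ ⋂ a : B, ⋂ _ : 0 ≤ a, {φ | 0 ≤ φ a} := by
    ext φ; simp [IsState]
  rw [this]
  refine (isClosed_eq (WeakDual.eval_continuous 1) continuous_const).inter ?_
  refine isClosed_iInter fun a => isClosed_iInter fun _ => ?_
  exact isClosed_le continuous_const (WeakDual.eval_continuous a)

theorem isCompact_isState : IsCompact {φ : WeakDual ℂ B | IsState φ} := by
  refine (WeakDual.isCompact_closedBall (𝕜 := ℂ) (E := B) 0 1).of_isClosed_subset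
    isClosed_isState ?_
  intro φ hφ
  rw [Set.mem_preimage, mem_closedBall_zero_iff]
  refine ContinuousLinearMap.opNorm_le_bound _ zero_le_one fun a => ?_
  rw [one_mul]
  exact IsState.norm_le hφ a

end States

/-- A general minimality principle (Zorn plus compactness). -/
theorem exists_min_closed {X : Type*} [TopologicalSpace X] (P : Set X → Prop)
    (hP : ∀ c : Set (Set X), (∀ s ∈ c, P s) → P (⋂₀ c)) (S : Set X) (hS : IsCompact S)
    (hSc : IsClosed S) (hne : S.Nonempty) (hPS : P S) :
    ∃ L ⊆ S, IsClosed L ∧ L.Nonempty ∧ P L ∧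
      ∀ L' ⊆ L, IsClosed L' → L'.Nonempty → P L' → L' = L := by
  obtain ⟨L, hLS, hL⟩ := zorn_superset_nonempty
    {L : Set X | L ⊆ S ∧ IsClosed L ∧ L.Nonempty ∧ P L} (by
      intro c hc hchain hcne
      refine ⟨⋂₀ c, ⟨?_, ?_, ?_, ?_⟩, fun s hs => Set.sInter_subset_of_mem hs⟩
      · obtain ⟨s, hs⟩ := hcne
        exact (Set.sInter_subset_of_mem hs).trans (hc hs).1
      · exact isClosed_sInter fun s hs => (hc hs).2.1
      · have : Nonempty c := hcne.to_subtype
        rw [Set.sInter_eq_iInter]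
        refine IsCompact.nonempty_iInter_of_directed_nonempty_isCompact_isClosed _ ?_ ?_ ?_ ?_
        · intro a b
          rcases hchain.total a.2 b.2 with h | h
          · exact ⟨a, le_refl _, h⟩
          · exact ⟨b, h, le_refl _⟩
        · exact fun s => (hc s.2).2.2.1
        · exact fun s => hS.of_isClosed_subset (hc s.2).2.1 (hc s.2).1
        · exact fun s => (hc s.2).2.1
      · exact hP c fun s hs => (hc hs).2.2.2) S ⟨subset_rfl, hSc, hne, hPS⟩
  refine ⟨L, hLS, hL.prop.2.1, hL.prop.2.2.1, hL.prop.2.2.2, fun L' h1 h2 h3 h4 => ?_⟩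
  exact hL.eq_of_subset ⟨h1.trans hLS, h2, h3, h4⟩ h1

/-- Translation of bounded complex functions on `G`. -/
def shift (g : G) (f : lp (fun _ : G => ℂ) ∞) : lp (fun _ : G => ℂ) ∞ :=
  ⟨fun k => f (g⁻¹ * k), memℓp_infty ⟨‖f‖, by
    rintro _ ⟨k, rfl⟩; exact lp.norm_apply_le_norm (by simp) f _⟩⟩

section Dyn

variable {B : Type*} [CStarAlgebra B]
variable (α : G →* (B ≃⋆ₐ[ℂ] B)) (M : lp (fun _ : G => ℂ) ∞ →⋆ₐ[ℂ] B)

theorem norm_alpha_le (g : G) (a : B) : ‖α g a‖ ≤ ‖a‖ := NonUnitalStarAlgHom.norm_apply_le (α g) a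

/-- `α g` as a continuous linear map. -/
def alphaL (g : G) : B →L[ℂ] B :=
  LinearMap.mkContinuous
    { toFun := fun a => α g a
      map_add' := fun a b => map_add (α g) a b
      map_smul' := fun c a => map_smul (α g) c a } 1
    (fun a => by rw [one_mul]; exact norm_alpha_le α g a)

/-- The action on functionals. -/
def act (g : G) (φ : WeakDual ℂ B) : WeakDual ℂ B :=
  StrongDual.toWeakDual ((WeakDual.toStrongDual φ).comp (alphaL α g))

theorem act_apply (g : G) (φ : WeakDual ℂ B) (a : B) : act α g φ a = φ (α g a) := rfl

theorem act_act (g h : G) (φ : WeakDual ℂ B) : act α g (act α h φ) = act α (h * g) φ := by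
  apply DFunLike.ext; intro a
  simp [act_apply]

theorem act_one (φ : WeakDual ℂ B) : act α 1 φ = φ := by
  apply DFunLike.ext; intro a
  simp [act_apply]

theorem continuous_act (g : G) : Continuous (act α g) :=
  WeakDual.continuous_of_continuous_eval fun a => WeakDual.eval_continuous (α g a)

theorem norm_weakDual_le (φ : WeakDual ℂ B) (a : B) : ‖φ a‖ ≤ ‖WeakDual.toStrongDual φ‖ * ‖a‖ :=
  ContinuousLinearMap.le_opNorm (WeakDual.toStrongDual φ) a

/-- The orbit function of `a` under the functional `q`. -/
def orb (q : WeakDual ℂ B) (a : B) : lp (fun _ : G => ℂ) ∞ :=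
  ⟨fun s => q (α s⁻¹ a), memℓp_infty ⟨‖WeakDual.toStrongDual q‖ * ‖a‖, by
    rintro _ ⟨k, rfl⟩
    refine (norm_weakDual_le q _).trans ?_
    gcongr
    exact norm_alpha_le α _ a⟩⟩

theorem orb_apply (q : WeakDual ℂ B) (a : B) (s : G) : orb α q a s = q (α s⁻¹ a) := rfl

theorem norm_orb_le (q : WeakDual ℂ B) (a : B) :
    ‖orb α q a‖ ≤ ‖WeakDual.toStrongDual q‖ * ‖a‖ := by
  refine lp.norm_le_of_forall_le (by positivity) fun s => ?_
  rw [orb_apply]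
  refine (norm_weakDual_le q _).trans ?_
  gcongr
  exact norm_alpha_le α _ a

/-- Convolution of functionals. -/
def conv (φ q : WeakDual ℂ B) : WeakDual ℂ B :=
  StrongDual.toWeakDual (LinearMap.mkContinuous
    { toFun := fun a => φ (M (orb α q a))
      map_add' := fun a b => by
        rw [← map_add, ← map_add]; congr 2
        ext s; simp [orb_apply]
      map_smul' := fun c a => by
        rw [RingHom.id_apply, ← map_smul, ← map_smul]; congr 2
        ext s; simp [orb_apply] }
    (‖WeakDual.toStrongDual φ‖ * ‖WeakDual.toStrongDual q‖) (fun a => by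
      refine (norm_weakDual_le φ _).trans ?_
      rw [mul_assoc]
      gcongr
      exact (NonUnitalStarAlgHom.norm_apply_le M _).trans (norm_orb_le α q a)))

theorem conv_apply (φ q : WeakDual ℂ B) (a : B) : conv α M φ q a = φ (M (orb α q a)) := rfl

theorem act_conv (hM : ∀ g f, α g (M f) = M (shift g f)) (g : G) (φ q : WeakDual ℂ B) :
    act α g (conv α M φ q) = conv α M (act α g φ) q := by
  apply DFunLike.ext; intro a
  rw [act_apply, conv_apply, conv_apply, act_apply, hM]
  congr 2
  ext s
  change q (α s⁻¹ (α g a)) = q (α (g⁻¹ * s)⁻¹ a)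
  simp

theorem continuous_conv (q : WeakDual ℂ B) : Continuous (fun φ => conv α M φ q) :=
  WeakDual.continuous_of_continuous_eval fun a => WeakDual.eval_continuous (M (orb α q a))

variable [PartialOrder B] [StarOrderedRing B]

theorem alpha_nonneg (g : G) {a : B} (ha : 0 ≤ a) : 0 ≤ α g a := map_nonneg (α g) ha

theorem IsState.act {φ : WeakDual ℂ B} (h : IsState φ) (g : G) : IsState (act α g φ) :=
  ⟨by rw [act_apply, map_one, h.1], fun a ha => h.2 _ (alpha_nonneg α g ha)⟩

theorem M_nonneg_of {f : lp (fun _ : G => ℂ) ∞} (hf : ∀ s, 0 ≤ f s) :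
    0 ≤ M f := by
  have hs : ∀ s, 0 ≤ (f s).re ∧ 0 = (f s).im := fun s => Complex.nonneg_iff.1 (hf s)
  let w : lp (fun _ : G => ℂ) ∞ := ⟨fun s => (√(f s).re : ℝ), memℓp_infty ⟨√‖f‖, by
    rintro _ ⟨s, rfl⟩
    simp only [Complex.norm_real, Real.norm_of_nonneg (Real.sqrt_nonneg _)]
    apply Real.sqrt_le_sqrt
    exact (Complex.re_le_norm _).trans (lp.norm_apply_le_norm (by simp) f s)⟩⟩
  have hw : f = star w * w := by
    ext s
    change f s = star ((√(f s).re : ℝ) : ℂ) * ((√(f s).re : ℝ) : ℂ)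
    rw [Complex.star_def, Complex.conj_ofReal, ← Complex.ofReal_mul, Real.mul_self_sqrt (hs s).1]
    apply Complex.ext
    · simp
    · simp [← (hs s).2]
  rw [hw, map_mul, map_star]
  exact star_mul_self_nonneg _

theorem IsState.conv {φ q : WeakDual ℂ B} (h : IsState φ) (hq : IsState q) :
    IsState (conv α M φ q) := by
  constructor
  · rw [conv_apply]
    have : orb α q 1 = 1 := by
      ext s; rw [orb_apply, map_one, hq.1]; rfl
    rw [this, map_one, h.1]
  · intro a ha
    rw [conv_apply]
    exact h.2 _ (M_nonneg_of M fun s => hq.2 _ (alpha_nonneg α _ ha))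

/-- Closed convex invariant sets of states are closed under convolution by states. -/
theorem conv_mem {L : Set (WeakDual ℂ B)} (hc : IsClosed L) (hcv : Convex ℝ L)
    (hinv : ∀ g, ∀ y ∈ L, act α g y ∈ L) {φ q : WeakDual ℂ B} (h : IsState φ) (hq : q ∈ L) :
    conv α M φ q ∈ L := by
  by_contra hn
  obtain ⟨f, u, h1, h2⟩ := @RCLike.geometric_hahn_banach_closed_point ℂ (WeakDual ℂ B) _ _ _ L
    (conv α M φ q) _ _ _ _ _ weakDual_lc hcv hc hn
  obtain ⟨a, ha⟩ := LinearMap.dualEmbedding_surjective (topDualPairing ℂ B) f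
  have hf : ∀ y : WeakDual ℂ B, f y = y a := fun y => by rw [← ha]; rfl
  simp only [hf] at h1 h2
  have h3 : ∀ s, (orb α q a s).re < u := fun s => h1 _ (hinv s⁻¹ q hq)
  -- take the real part of the orbit function
  let F := orb α q a
  have hp : 0 ≤ M (((2 * u : ℝ) : ℂ) • 1 - (F + star F)) := by
    apply M_nonneg_of
    intro s
    change (0 : ℂ) ≤ ((2 * u : ℝ) : ℂ) * 1 - (F s + star (F s))
    have := (h3 s).le
    rw [Complex.nonneg_iff]
    constructor
    · simp; change (F s).re ≤ u at this; linarith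
    · simp
  have h4 := h.2 _ hp
  rw [map_sub, map_sub, map_smul, map_smul, map_one, h.1, map_add, map_add, map_star,
    h.map_star] at h4
  have h5 := (Complex.nonneg_iff.1 h4).1
  rw [conv_apply] at h2
  change u < (φ (M F)).re at h2
  simp at h5
  linarith

end Dyn

/-- The averaging argument, abstractly: a finite `G`-permuted family of closed convex sets
contains every extreme point of a minimal set. -/
theorem avg_abs {E : Type*} [AddCommGroup E] [Module ℝ E] [TopologicalSpace E] [T2Space E]
    [ContinuousAdd E] [ContinuousConstSMul ℝ E] {K : Type*} (T : K → E →ₗ[ℝ] E) {L : Set E}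
    (hLc : IsCompact L) (hLcv : Convex ℝ L)
    (hLmin : ∀ L' ⊆ L, IsClosed L' → L'.Nonempty → Convex ℝ L' →
      (∀ g, ∀ y ∈ L', T g y ∈ L') → L' = L)
    {x : E} (hx : x ∈ L.extremePoints ℝ)
    {ι : Type*} [Fintype ι] [Nonempty ι] (Y : ι → Set E)
    (hYL : ∀ i, Y i ⊆ L) (hYc : ∀ i, IsClosed (Y i)) (hYne : ∀ i, (Y i).Nonempty)
    (hYcv : ∀ i, Convex ℝ (Y i)) (σ : K → Equiv.Perm ι)
    (hσ : ∀ g i, ∀ y ∈ Y i, T g y ∈ Y (σ g i)) (i : ι) : x ∈ Y i := by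
  classical
  let n : ℝ := Fintype.card ι
  have hn : 0 < n := by
    have : 0 < Fintype.card ι := Fintype.card_pos
    exact Nat.cast_pos.2 this
  let A : (ι → E) →ₗ[ℝ] E :=
    n⁻¹ • ∑ i, LinearMap.proj (R := ℝ) (φ := fun _ : ι => E) i
  have hA : ∀ y, A y = n⁻¹ • ∑ i, y i := fun y => by
    simp [A, LinearMap.sum_apply]
  have hAc : Continuous A := by
    have : (A : (ι → E) → E) = fun y => n⁻¹ • ∑ i, y i := funext hA
    rw [this]
    exact Continuous.const_smul (g := fun y : ι → E => ∑ i, y i)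
      (continuous_finsetSum _ fun i _ => continuous_apply i) n⁻¹
  have hD := hLmin (A '' (Set.univ.pi Y)) (by
      rintro _ ⟨y, hy, rfl⟩
      rw [hA, Finset.smul_sum]
      refine hLcv.sum_mem (fun _ _ => by positivity) ?_ fun j _ => hYL j (hy j trivial)
      rw [Finset.sum_const, Finset.card_univ, nsmul_eq_mul]
      exact mul_inv_cancel₀ hn.ne')
    ((isCompact_univ_pi fun j => hLc.of_isClosed_subset (hYc j) (hYL j)).image
      hAc).isClosed
    ((Set.univ_pi_nonempty_iff.2 hYne).image _)
    ((convex_pi fun j _ => hYcv j).linear_image A) (by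
      rintro g _ ⟨y, hy, rfl⟩
      refine ⟨fun j => T g (y ((σ g).symm j)), fun j _ => ?_, ?_⟩
      · have := hσ g _ _ (hy ((σ g).symm j) trivial)
        simpa using this
      · rw [hA, hA]
        have e1 : T g (n⁻¹ • ∑ i, y i) = n⁻¹ • ∑ i, T g (y i) := by
          rw [map_smul, map_sum]
        rw [e1]
        congr 1
        exact Equiv.sum_comp (σ g).symm (fun j => T g (y j)))
  have hxL : x ∈ L := hx.1
  rw [← hD] at hxL
  obtain ⟨y, hy, hyx⟩ := hxL
  by_contra hxi
  let J := Finset.univ.filter fun j => y j ≠ x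
  have hJ : J.Nonempty := ⟨i, by
    simp only [J, Finset.mem_filter, Finset.mem_univ, true_and]
    intro h
    exact hxi (h ▸ hy i trivial)⟩
  have hm : 0 < (J.card : ℝ) := by exact_mod_cast hJ.card_pos
  have h1 : ∑ j, (y j - x) = 0 := by
    rw [Finset.sum_sub_distrib, Finset.sum_const, Finset.card_univ]
    rw [hA] at hyx
    have : ∑ j, y j = n • x := by rw [← hyx, smul_inv_smul₀ hn.ne']
    rw [this, ← Nat.cast_smul_eq_nsmul ℝ]
    exact sub_self _
  have h2 : ∑ j ∈ J, (y j - x) = 0 := by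
    rw [← h1]
    apply Finset.sum_subset (Finset.subset_univ _)
    intro j _ hj
    simp only [J, Finset.mem_filter, Finset.mem_univ, true_and, not_not] at hj
    rw [hj, sub_self]
  have h3 : ∑ j ∈ J, (J.card : ℝ)⁻¹ • y j = x := by
    rw [Finset.sum_sub_distrib, Finset.sum_const, sub_eq_zero] at h2
    rw [← Finset.smul_sum, h2, ← Nat.cast_smul_eq_nsmul ℝ, inv_smul_smul₀ hm.ne']
  have h4 := (Convex.mem_extremePoints_iff_convex_sdiff hLcv).1 hx
  have h5 : ∑ j ∈ J, (J.card : ℝ)⁻¹ • y j ∈ L \ {x} := by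
    refine h4.2.sum_mem (fun _ _ => by positivity) ?_ fun j hj => ⟨hYL j (hy j trivial), ?_⟩
    · rw [Finset.sum_const, nsmul_eq_mul]
      exact mul_inv_cancel₀ hm.ne'
    · simpa [J] using hj
  exact h5.2 h3

section Min

variable {B : Type*} [CStarAlgebra B] [PartialOrder B] [StarOrderedRing B]
variable (α : G →* (B ≃⋆ₐ[ℂ] B)) (M : lp (fun _ : G => ℂ) ∞ →⋆ₐ[ℂ] B)

/-- Minimal closed convex invariant sets of states. -/
structure IsMinSet (L : Set (WeakDual ℂ B)) : Prop where
  closed : IsClosed L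
  ne : L.Nonempty
  state : ∀ y ∈ L, IsState y
  cvx : Convex ℝ L
  inv : ∀ g, ∀ y ∈ L, act α g y ∈ L
  min : ∀ L' ⊆ L, IsClosed L' → L'.Nonempty → Convex ℝ L' →
    (∀ g, ∀ y ∈ L', act α g y ∈ L') → L' = L

theorem exists_isMinSet (S : Set (WeakDual ℂ B)) (hS : IsClosed S) (hne : S.Nonempty)
    (hst : ∀ y ∈ S, IsState y) (hcv : Convex ℝ S) (hinv : ∀ g, ∀ y ∈ S, act α g y ∈ S) :
    ∃ L ⊆ S, IsMinSet α L := by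
  obtain ⟨L, h1, h2, h3, ⟨h4, h5⟩, h6⟩ := exists_min_closed
    (fun L : Set (WeakDual ℂ B) => Convex ℝ L ∧ ∀ g, ∀ y ∈ L, act α g y ∈ L)
    (fun c hc => ⟨convex_sInter fun s hs => (hc s hs).1,
      fun g y hy s hs => (hc s hs).2 g y (hy s hs)⟩) S
    (isCompact_isState.of_isClosed_subset hS hst) hS hne ⟨hcv, hinv⟩
  exact ⟨L, h1, h2, h3, fun y hy => hst y (h1 hy), h4, h5,
    fun L' a b c d e => h6 L' a b c ⟨d, e⟩⟩

variable {α} in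
theorem IsMinSet.compact {L : Set (WeakDual ℂ B)} (hL : IsMinSet α L) : IsCompact L :=
  isCompact_isState.of_isClosed_subset hL.closed hL.state

theorem act_add (g : G) (y z : WeakDual ℂ B) : act α g (y + z) = act α g y + act α g z := rfl

theorem act_smul (g : G) (r : ℝ) (y : WeakDual ℂ B) : act α g (r • y) = r • act α g y := rfl

/-- The action as a real linear map. -/
def actL (g : G) : WeakDual ℂ B →ₗ[ℝ] WeakDual ℂ B :=
  { toFun := act α g
    map_add' := act_add α g
    map_smul' := act_smul α g }

variable {α} in
theorem IsMinSet.exists_conv {L S : Set (WeakDual ℂ B)} (hL : IsMinSet α L)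
    (hM : ∀ g f, α g (M f) = M (shift g f))
    (hS : IsClosed S) (hne : S.Nonempty)
    (hst : ∀ y ∈ S, IsState y) (hcv : Convex ℝ S) (hinv : ∀ g, ∀ y ∈ S, act α g y ∈ S)
    {q x : WeakDual ℂ B} (hq : q ∈ L) (hx : x ∈ L) : ∃ φ ∈ S, conv α M φ q = x := by
  have hcS : IsCompact S := isCompact_isState.of_isClosed_subset hS hst
  have hcv2 : Convex ℝ ((fun φ => conv α M φ q) '' S) := by
    rintro _ ⟨φ₁, h₁, rfl⟩ _ ⟨φ₂, h₂, rfl⟩ a b ha hb hab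
    exact ⟨a • φ₁ + b • φ₂, hcv h₁ h₂ ha hb hab, rfl⟩
  have h := hL.min ((fun φ => conv α M φ q) '' S) (by
      rintro _ ⟨φ, hφ, rfl⟩
      exact conv_mem α M hL.closed hL.cvx hL.inv (hst φ hφ) hq)
    (hcS.image (continuous_conv α M q)).isClosed (hne.image _)
    hcv2 (by
      rintro g _ ⟨φ, hφ, rfl⟩
      exact ⟨act α g φ, hinv g φ hφ, (act_conv α M hM g φ q).symm⟩)
  rw [← h] at hx
  exact hx


variable {α} in
theorem IsMinSet.mem_of_finite {L : Set (WeakDual ℂ B)} (hL : IsMinSet α L)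
    {x : WeakDual ℂ B} (hx : x ∈ L.extremePoints ℝ)
    {ι : Type*} [Fintype ι] [Nonempty ι] (Y : ι → Set (WeakDual ℂ B))
    (hYL : ∀ i, Y i ⊆ L) (hYc : ∀ i, IsClosed (Y i)) (hYne : ∀ i, (Y i).Nonempty)
    (hYcv : ∀ i, Convex ℝ (Y i)) (σ : G → Equiv.Perm ι)
    (hσ : ∀ g i, ∀ y ∈ Y i, act α g y ∈ Y (σ g i)) (i : ι) : x ∈ Y i :=
  avg_abs (actL α) hL.compact hL.cvx hL.min hx Y hYL hYc hYne hYcv σ hσ i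

end Min

section Ext

variable {B : Type*} [CStarAlgebra B] [PartialOrder B] [StarOrderedRing B]
variable (α : G →* (B ≃⋆ₐ[ℂ] B)) (M : lp (fun _ : G => ℂ) ∞ →⋆ₐ[ℂ] B)

/-- Compression of a functional: `b ↦ c * φ (w b w)`. -/
def compr (φ : WeakDual ℂ B) (c : ℂ) (w : B) : WeakDual ℂ B :=
  StrongDual.toWeakDual (c • (WeakDual.toStrongDual φ).comp
    ((ContinuousLinearMap.mul ℂ B w).comp ((ContinuousLinearMap.mul ℂ B).flip w)))

theorem compr_apply (φ : WeakDual ℂ B) (c : ℂ) (w b : B) :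
    compr φ c w b = c * φ (w * (b * w)) := rfl

theorem isState_compr {φ : WeakDual ℂ B} (h : IsState φ) {w : B} (hw : IsSelfAdjoint w) {c : ℝ}
    (hc : 0 < c) (hcw : φ (w * w) = c) : IsState (compr φ ((c⁻¹ : ℝ) : ℂ) w) := by
  constructor
  · rw [compr_apply, one_mul, hcw, ← Complex.ofReal_mul, inv_mul_cancel₀ hc.ne']
    rfl
  · intro a ha
    rw [compr_apply]
    refine mul_nonneg (Complex.zero_le_real.2 (inv_nonneg.2 hc.le)) (h.2 _ ?_)
    have := star_left_conjugate_nonneg ha w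
    rwa [hw.star_eq, mul_assoc] at this

/-- The square root of a bounded function with values between `1/4` and `3/4`. -/
def sqrtE (R : G → ℝ) (hR : ∀ s, R s ≤ 1) : lp (fun _ : G => ℂ) ∞ :=
  ⟨fun s => ((√(R s) : ℝ) : ℂ), memℓp_infty ⟨1, by
    rintro _ ⟨s, rfl⟩
    simp only [Complex.norm_real, Real.norm_of_nonneg (Real.sqrt_nonneg _)]
    exact Real.sqrt_le_iff.2 ⟨zero_le_one, by simpa using hR s⟩⟩⟩

variable {α} in
theorem ext_half {q φ : WeakDual ℂ B}
    (hφ : IsState φ)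
    (R : lp (fun _ : G => ℂ) ∞) (r : G → ℝ) (hr : ∀ s, R s = r s) (h1 : ∀ s, 1 / 4 ≤ r s)
    (h2 : ∀ s, r s ≤ 1) : ∃ c : ℝ, 0 < c ∧ φ (M R) = c ∧ ∃ φ₁ : WeakDual ℂ B, IsState φ₁ ∧
      ∀ a, (c : ℂ) * conv α M φ₁ q a = φ (M (R * orb α q a)) := by
  have hn : 0 ≤ φ (M (R - ((1 / 4 : ℝ) : ℂ) • 1)) := hφ.2 _ (M_nonneg_of M fun s => by
    change (0 : ℂ) ≤ R s - ((1 / 4 : ℝ) : ℂ) * 1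
    rw [hr, mul_one, ← Complex.ofReal_sub]
    exact Complex.zero_le_real.2 (sub_nonneg.2 (h1 s)))
  rw [map_sub, map_sub, map_smul, map_smul, map_one, hφ.1] at hn
  obtain ⟨n1, n2⟩ := Complex.nonneg_iff.1 hn
  have m1 : 0 < (φ (M R)).re := by
    simp at n1
    linarith
  have m2 : (φ (M R)).im = 0 := by
    simp at n2
    exact n2.symm
  have m3 : φ (M R) = ((φ (M R)).re : ℝ) := by
    apply Complex.ext
    · simp
    · simpa using m2
  refine ⟨(φ (M R)).re, m1, m3, ?_⟩
  let w := sqrtE r h2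
  have hw : star w = w := by
    ext s
    exact Complex.conj_ofReal _
  have hww : w * w = R := by
    ext s
    change ((√(r s) : ℝ) : ℂ) * ((√(r s) : ℝ) : ℂ) = R s
    rw [hr, ← Complex.ofReal_mul, Real.mul_self_sqrt (by linarith [h1 s])]
  have hMw : IsSelfAdjoint (M w) := by
    change star (M w) = M w
    rw [← map_star, hw]
  refine ⟨compr φ (((φ (M R)).re⁻¹ : ℝ) : ℂ) (M w), isState_compr hφ hMw m1 (by
    rw [← map_mul, hww]; exact m3), fun a => ?_⟩
  rw [conv_apply, compr_apply, ← mul_assoc, ← Complex.ofReal_mul, mul_inv_cancel₀ m1.ne',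
    Complex.ofReal_one, one_mul, ← map_mul, ← map_mul, mul_comm (orb α q a), ← mul_assoc, hww]

variable {α} in
theorem ext_key {L : Set (WeakDual ℂ B)} (hL : IsMinSet α L)
    {x : WeakDual ℂ B} (hx : x ∈ L.extremePoints ℝ) {q φ : WeakDual ℂ B} (hq : q ∈ L)
    (hφ : IsState φ) (hxq : conv α M φ q = x)
    (R : lp (fun _ : G => ℂ) ∞) (r : G → ℝ) (hr : ∀ s, R s = r s) (h1 : ∀ s, 1 / 4 ≤ r s)
    (h2 : ∀ s, r s ≤ 3 / 4) (a : B) : φ (M (R * orb α q a)) = φ (M R) * x a := by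
  obtain ⟨c, c0, hc, φ₁, s₁, e₁⟩ := ext_half (α := α) M (q := q) hφ R r hr h1
    (fun s => (h2 s).trans (by norm_num))
  obtain ⟨d, d0, hd, φ₂, s₂, e₂⟩ := ext_half (α := α) M (q := q) hφ (1 - R)
    (fun s => 1 - r s)
    (fun s => by change (1 : ℂ) - R s = _; rw [hr]; simp) (fun s => by linarith [h2 s])
    (fun s => by linarith [h1 s])
  have hcd : c + d = 1 := by
    rw [map_sub, map_sub, map_one, hφ.1, hc] at hd
    have : (((1 - c : ℝ)) : ℂ) = d := by rw [← hd]; simp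
    have := Complex.ofReal_injective this
    linarith
  have hseg : x ∈ openSegment ℝ (conv α M φ₁ q) (conv α M φ₂ q) := by
    refine ⟨c, d, c0, d0, hcd, ?_⟩
    apply DFunLike.ext
    intro b
    change c • conv α M φ₁ q b + d • conv α M φ₂ q b = x b
    rw [Complex.real_smul, Complex.real_smul, e₁, e₂, ← map_add, ← map_add, ← add_mul,
      add_sub_cancel, one_mul, ← hxq, conv_apply]
  have h3 := hx.2 (conv_mem α M hL.closed hL.cvx hL.inv s₁ hq)
    (conv_mem α M hL.closed hL.cvx hL.inv s₂ hq) hseg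
  rw [← e₁, h3, hc]

variable {α} in
theorem ext_mult {L : Set (WeakDual ℂ B)} (hL : IsMinSet α L)
    {x : WeakDual ℂ B} (hx : x ∈ L.extremePoints ℝ) {q φ : WeakDual ℂ B} (hq : q ∈ L)
    (hφ : IsState φ) (hxq : conv α M φ q = x) {a : B} (ha : IsSelfAdjoint a) (b : B) :
    φ (M (orb α q a) * b) = x a * φ b ∧ φ (b * M (orb α q a)) = x a * φ b := by
  have hqs := hL.state q hq
  have hxs := hL.state x hx.1
  let F := orb α q a
  have hreal : ∀ {y : WeakDual ℂ B}, IsState y → ∀ {c : B}, IsSelfAdjoint c →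
      y c = ((y c).re : ℝ) := by
    intro y hy c hc
    have := hy.map_star c
    rw [hc.star_eq] at this
    exact (Complex.conj_eq_iff_re.1 this.symm).symm
  have hα : ∀ s, IsSelfAdjoint (α s a) := fun s => by
    change star (α s a) = α s a
    rw [← map_star, ha.star_eq]
  have hF : ∀ s, F s = ((F s).re : ℝ) := fun s => hreal hqs (hα s⁻¹)
  have hFb : ∀ s, |(F s).re| ≤ ‖a‖ := fun s =>
    (Complex.abs_re_le_norm _).trans ((hqs.norm_le _).trans (norm_alpha_le α _ a))
  let t : ℝ := (4 * (‖a‖ + 1))⁻¹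
  have ht : 0 < t := by positivity
  have hta : t * ‖a‖ ≤ 1 / 4 := by
    simp only [t]
    rw [inv_mul_le_iff₀ (by positivity)]
    linarith
  have hb : ∀ s, |t * (F s).re| ≤ 1 / 4 := fun s => by
    rw [abs_mul, abs_of_pos ht]
    exact (mul_le_mul_of_nonneg_left (hFb s) ht.le).trans hta
  have hk := ext_key M hL hx hq hφ hxq (((1 / 2 : ℝ) : ℂ) • 1 + (t : ℂ) • F)
    (fun s => 1 / 2 + t * (F s).re) (fun s => by
      change ((1 / 2 : ℝ) : ℂ) * 1 + (t : ℂ) * F s = _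
      rw [hF s]; push_cast; simp)
    (fun s => by have := (abs_le.1 (hb s)).1; linarith)
    (fun s => by have := (abs_le.1 (hb s)).2; linarith) a
  have hFx : φ (M F) = x a := by rw [← hxq, conv_apply]
  change φ (M ((((1 / 2 : ℝ) : ℂ) • 1 + (t : ℂ) • F) * F)) = _ at hk
  rw [add_mul, smul_mul_assoc, smul_mul_assoc, one_mul] at hk
  simp only [map_add, map_smul, map_one, hφ.1, hFx, smul_eq_mul] at hk
  have ht' : (t : ℂ) ≠ 0 := Complex.ofReal_ne_zero.2 ht.ne'
  have hsq : φ (M (F * F)) = x a * x a := by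
    apply mul_left_cancel₀ ht'
    linear_combination hk
  have hFs : star F = F := by
    ext s
    change star (F s) = F s
    rw [hF s]
    exact Complex.conj_ofReal _
  let T : B := M F - x a • 1
  have hT : IsSelfAdjoint T := by
    change star (M F - x a • (1 : B)) = M F - x a • 1
    rw [star_sub, ← map_star, hFs, star_smul, star_one]
    congr 2
    rw [hreal hxs ha]
    exact Complex.conj_ofReal _
  have h0 : φ (T * T) = 0 := by
    have : T * T = M (F * F) - (2 * x a) • M F + (x a * x a) • 1 := by
      simp only [T, map_mul, sub_mul, mul_sub, smul_mul_assoc, mul_smul_comm, one_mul, mul_one,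
        smul_smul, two_mul, add_smul]
      module
    rw [this, map_add, map_sub, map_smul, map_smul, hφ.1, hsq, hFx]
    simp only [smul_eq_mul]
    ring
  obtain ⟨r1, r2⟩ := hφ.mul_eq_zero_of hT h0 b
  constructor
  · have : T * b = M F * b - x a • b := by simp [T, sub_mul]
    rw [this, map_sub, map_smul, sub_eq_zero, smul_eq_mul] at r1
    exact r1
  · have : b * T = b * M F - x a • b := by simp [T, mul_sub]
    rw [this, map_sub, map_smul, sub_eq_zero, smul_eq_mul] at r2
    exact r2

variable {α} in
/-- If `φ` does not vanish at the unitary implementing `α g`, then `g` fixes `x`. -/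
theorem ext_fix {L : Set (WeakDual ℂ B)} (hL : IsMinSet α L)
    (hM : ∀ g f, α g (M f) = M (shift g f))
    {x : WeakDual ℂ B} (hx : x ∈ L.extremePoints ℝ) {q φ : WeakDual ℂ B} (hq : q ∈ L)
    (hφ : IsState φ) (hxq : conv α M φ q = x) (g : G) (v : B) (hv : ∀ b, v * b = α g b * v)
    (hne : φ v ≠ 0) : act α g x = x := by
  have key : ∀ a : B, IsSelfAdjoint a → x (α g a) = x a := by
    intro a ha
    have hα : IsSelfAdjoint (α g a) := by
      change star (α g a) = α g a
      rw [← map_star, ha.star_eq]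
    have h1 := (ext_mult M hL hx hq hφ hxq ha v).2
    have h2 := (ext_mult M hL hx hq hφ hxq hα v).1
    have hs : shift g (orb α q a) = orb α q (α g a) := by
      ext s
      change q (α (g⁻¹ * s)⁻¹ a) = q (α s⁻¹ (α g a))
      simp
    rw [hv, hM, hs, h2] at h1
    exact mul_right_cancel₀ hne h1
  apply DFunLike.ext
  intro a
  rw [act_apply]
  have ha := realPart_add_I_smul_imaginaryPart a
  rw [← ha]
  simp only [map_add, map_smul]
  rw [key _ (realPart a).2, key _ (imaginaryPart a).2]

end Ext

/-- A countable closed invariant set in a compact Hausdorff space contains a finite orbit. -/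
theorem exists_finite_orbit {X : Type*} [TopologicalSpace X] [CompactSpace X] [T2Space X]
    (T : G → X → X) (hT : ∀ g, Continuous (T g)) (h1 : ∀ k, T 1 k = k)
    (hmul : ∀ g h k, T g (T h k) = T (h * g) k) (C : Set X) (hC : IsClosed C) (hne : C.Nonempty)
    (hcount : C.Countable) (hinv : ∀ g, ∀ k ∈ C, T g k ∈ C) :
    ∃ Z ⊆ C, Z.Finite ∧ Z.Nonempty ∧ ∀ g, ∀ k ∈ Z, T g k ∈ Z := by
  obtain ⟨Z, hZC, hZc, hZne, hZi, hZm⟩ := exists_min_closed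
    (fun L : Set X => ∀ g, ∀ y ∈ L, T g y ∈ L)
    (fun c hc g y hy s hs => hc s hs g y (hy s hs)) C hC.isCompact hC hne hinv
  refine ⟨Z, hZC, ?_, hZne, hZi⟩
  have hcZ : Countable Z := (hcount.mono hZC).to_subtype
  have hcomp : CompactSpace Z := isCompact_iff_compactSpace.1 hZc.isCompact
  have hneZ : Nonempty Z := hZne.to_subtype
  obtain ⟨k0, hk0⟩ := nonempty_interior_of_iUnion_of_closed (f := fun k : Z => ({k} : Set Z))
    (fun k => isClosed_singleton) (by ext k; simp)
  have hopen : IsOpen ({k0} : Set Z) := by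
    obtain ⟨z, hz⟩ := hk0
    have : z = k0 := by simpa using interior_subset hz
    subst this
    have h2 : interior ({z} : Set Z) = {z} := by
      apply Set.Subset.antisymm interior_subset
      rintro _ rfl
      exact hz
    rw [← h2]
    exact isOpen_interior
  obtain ⟨U, hU, hUk⟩ := isOpen_induced_iff.1 hopen
  have hUZ : ∀ k ∈ Z, k ∈ U → k = k0 := fun k hk hkU => by
    have : (⟨k, hk⟩ : Z) ∈ ({k0} : Set Z) := by rw [← hUk]; exact hkU
    have := Set.mem_singleton_iff.1 this
    exact congrArg Subtype.val this
  have hk0U : (k0 : X) ∈ U := by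
    have : k0 ∈ (Subtype.val ⁻¹' U : Set Z) := by rw [hUk]; rfl
    exact this
  have hcov : Z ⊆ ⋃ g, T g ⁻¹' U := by
    by_contra hcon
    obtain ⟨k, hk, hkn⟩ := Set.not_subset.1 hcon
    have := hZm (Z \ ⋃ g, T g ⁻¹' U) Set.diff_subset
      (hZc.sdiff (isOpen_iUnion fun g => hU.preimage (hT g))) ⟨k, hk, hkn⟩ (by
        rintro g y ⟨hy, hyn⟩
        refine ⟨hZi g y hy, fun hc => hyn ?_⟩
        obtain ⟨h, hh⟩ := Set.mem_iUnion.1 hc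
        rw [Set.mem_preimage, hmul] at hh
        exact Set.mem_iUnion.2 ⟨_, hh⟩)
    have h3 : (k0 : X) ∈ Z \ ⋃ g, T g ⁻¹' U := this.symm.subset k0.2
    exact h3.2 (Set.mem_iUnion.2 ⟨1, by rw [Set.mem_preimage, h1]; exact hk0U⟩)
  obtain ⟨t, ht⟩ := hZc.isCompact.elim_finite_subcover _ (fun g => hU.preimage (hT g)) hcov
  refine (t.finite_toSet.image fun g => T g⁻¹ k0).subset fun k hk => ?_
  obtain ⟨g, hg, hgU⟩ := Set.mem_iUnion₂.1 (ht hk)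
  refine ⟨g, hg, ?_⟩
  change T g⁻¹ k0 = k
  rw [← hUZ _ (hZi g k hk) hgU, hmul, mul_inv_cancel, h1]

section Grp

variable {B : Type*} [CStarAlgebra B] [PartialOrder B] [StarOrderedRing B]
variable (α : G →* (B ≃⋆ₐ[ℂ] B)) (M : lp (fun _ : G => ℂ) ∞ →⋆ₐ[ℂ] B)

theorem exists_retract (N : Subgroup G) : ∃ π : G → N, ∀ (n : N) g, π (n * g) = n * π g := by
  have h : ∀ g : G, g * (QuotientGroup.mk g⁻¹ : G ⧸ N).out ∈ N := fun g => by
    obtain ⟨h, hh⟩ := QuotientGroup.mk_out_eq_mul N g⁻¹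
    rw [hh]
    simp
  refine ⟨fun g => ⟨_, h g⟩, fun n g => ?_⟩
  apply Subtype.ext
  change (n * g : G) * (QuotientGroup.mk (n * g)⁻¹ : G ⧸ N).out
    = n * (g * (QuotientGroup.mk g⁻¹ : G ⧸ N).out)
  have : (QuotientGroup.mk (n * g : G)⁻¹ : G ⧸ N) = QuotientGroup.mk g⁻¹ := by
    rw [QuotientGroup.eq]
    simp
  rw [this, mul_assoc]

/-- Pull back a bounded real function. -/
def pullE {N : Type*} (π : G → N) (f : lp (fun _ : N => ℝ) ∞) : lp (fun _ : G => ℂ) ∞ :=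
  ⟨fun s => ((f (π s) : ℝ) : ℂ), memℓp_infty ⟨‖f‖, by
    rintro _ ⟨s, rfl⟩
    simp only [Complex.norm_real]
    exact lp.norm_apply_le_norm (by simp) f _⟩⟩

theorem amenable_of_fix (hM : ∀ g f, α g (M f) = M (shift g f)) {y : WeakDual ℂ B}
    (hy : IsState y) (N : Subgroup G) (hN : ∀ n ∈ N, act α n y = y) : IsAmenable N := by
  obtain ⟨π, hπ⟩ := exists_retract N
  refine ⟨{ toFun := fun f => (y (M (pullE π f))).re, map_add' := ?_, map_smul' := ?_ },
    ?_, ?_, ?_⟩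
  · intro f g
    have : pullE π (f + g) = pullE π f + pullE π g := by
      ext s
      change (((f (π s) + g (π s) : ℝ)) : ℂ) = f (π s) + g (π s)
      push_cast
      rfl
    rw [this, map_add, map_add, Complex.add_re]
  · intro c f
    have : pullE π (c • f) = (c : ℂ) • pullE π f := by
      ext s
      change (((c * f (π s) : ℝ)) : ℂ) = c * f (π s)
      push_cast
      rfl
    rw [this, map_smul, map_smul]
    simp
  · have : pullE π (1 : lp (fun _ : N => ℝ) ∞) = 1 := by
      ext s
      exact Complex.ofReal_one
    change (y (M (pullE π 1))).re = 1
    rw [this, map_one, hy.1]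
    rfl
  · intro f hf
    exact (Complex.nonneg_iff.1 (hy.2 _ (M_nonneg_of M fun s =>
      Complex.zero_le_real.2 (hf (π s))))).1
  · intro n f
    change (y (M (pullE π (translInfty n f)))).re = (y (M (pullE π f))).re
    have : pullE π (translInfty n f) = shift (n : G) (pullE π f) := by
      ext s
      change ((f (n⁻¹ * π s) : ℝ) : ℂ) = (f (π ((n : G)⁻¹ * s)) : ℝ)
      rw [← hπ]
      rfl
    rw [this, ← hM, ← act_apply, hN n n.2]

/-- The stabilizer of a functional. -/
def stab (x : WeakDual ℂ B) : Subgroup G where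
  carrier := {g | act α g x = x}
  one_mem' := act_one α x
  mul_mem' := by
    intro a b ha hb
    change act α (a * b) x = x
    rw [← act_act, show act α a x = x from ha]
    exact hb
  inv_mem' := by
    intro a ha
    change act α a⁻¹ x = x
    have h : act α a⁻¹ (act α a x) = x := by rw [act_act, mul_inv_cancel, act_one]
    rwa [show act α a x = x from ha] at h

variable {α} in
theorem group_step {L : Set (WeakDual ℂ B)} (hL : IsMinSet α L)
    (hM : ∀ g f, α g (M f) = M (shift g f))
    {x : WeakDual ℂ B} (hx : x ∈ L.extremePoints ℝ)
    (hc : {H : Subgroup G | IsAmenable H}.Countable)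
    (hn : ∀ N : Subgroup G, N.Normal → IsAmenable N → N = ⊥)
    (F : Finset G) (hF : 1 ∉ F) : ∃ g, ∀ s ∈ F, act α (g * s * g⁻¹) x ≠ x := by
  classical
  by_contra! hcon
  let cj : G → (G → Bool) → (G → Bool) := fun s k g => k (s * g * s⁻¹)
  let D : Set ((G → Bool) × WeakDual ℂ B) :=
    {p | p.2 ∈ L ∧ ∀ g, p.1 g = true → act α g p.2 = p.2}
  have hD : IsCompact D := by
    refine (isCompact_univ.prod hL.compact).of_isClosed_subset ?_ fun p hp => ⟨trivial, hp.1⟩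
    have : D = Prod.snd ⁻¹' L ∩ ⋂ g, ({p : (G → Bool) × WeakDual ℂ B | p.1 g = false} ∪
      {p | act α g p.2 = p.2}) := by
      ext p
      simp only [D, Set.mem_ofPred_eq, Set.mem_inter_iff, Set.mem_preimage, Set.mem_iInter,
        Set.mem_union]
      refine and_congr_right fun _ => forall_congr' fun g => ?_
      cases p.1 g <;> simp
    rw [this]
    refine (hL.closed.preimage continuous_snd).inter (isClosed_iInter fun g => IsClosed.union ?_ ?_)
    · exact isClosed_eq ((continuous_apply g).comp continuous_fst) continuous_const
    · exact isClosed_eq ((continuous_act α g).comp continuous_snd) continuous_snd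
  let C1 : Set (G → Bool) := {k | k 1 = true} ∩ (⋂ a, ⋂ b, {k | k a = true → k b = true →
    k (a * b) = true}) ∩ (⋂ a, {k | k a = true → k a⁻¹ = true}) ∩
    (⋂ g : G, ⋃ f ∈ F, {k | k (g * f * g⁻¹) = true})
  have hop : ∀ g : G, IsClosed {k : G → Bool | k g = true} := fun g =>
    isClosed_eq (continuous_apply g) continuous_const
  have hcl : ∀ g : G, IsOpen {k : G → Bool | k g = true} := fun g =>
    (isClopen_discrete ({true} : Set Bool)).isOpen.preimage
      (continuous_apply (A := fun _ : G => Bool) g)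
  have hC1 : IsClosed C1 := by
    refine (((hop 1).inter ?_).inter ?_).inter ?_
    · exact isClosed_iInter fun a => isClosed_iInter fun b =>
        isClosed_imp (hcl a) (isClosed_imp (hcl b) (hop _))
    · exact isClosed_iInter fun a => isClosed_imp (hcl a) (hop _)
    · exact isClosed_iInter fun g => F.finite_toSet.isClosed_biUnion fun f _ => hop _
  let C : Set (G → Bool) := C1 ∩ Prod.fst '' D
  have hCc : IsClosed C := hC1.inter (hD.image continuous_fst).isClosed
  have hmk : ∀ k, k ∈ C ↔ k 1 = true ∧ (∀ a b, k a = true → k b = true → k (a * b) = true) ∧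
      (∀ a, k a = true → k a⁻¹ = true) ∧ (∀ g, ∃ f ∈ F, k (g * f * g⁻¹) = true) ∧
      ∃ y ∈ L, ∀ g, k g = true → act α g y = y := by
    intro k
    simp only [C, C1, D, Set.mem_inter_iff, Set.mem_ofPred_eq, Set.mem_iInter, Set.mem_iUnion,
      Set.mem_image, Prod.exists, exists_prop]
    constructor
    · rintro ⟨⟨⟨⟨h1, h2⟩, h3⟩, h4⟩, a, y, ⟨hy, hg⟩, rfl⟩
      exact ⟨h1, h2, h3, h4, y, hy, hg⟩
    · rintro ⟨h1, h2, h3, h4, y, hy, hg⟩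
      exact ⟨⟨⟨⟨h1, h2⟩, h3⟩, h4⟩, k, y, ⟨hy, hg⟩, rfl⟩
  have hfix : ∀ s (k : G → Bool) y, (∀ g, k g = true → act α g y = y) →
      ∀ g, cj s k g = true → act α g (act α s y) = act α s y := by
    intro s k y h g hg
    have := h _ hg
    have h2 : act α s (act α (s * g * s⁻¹) y) = act α g (act α s y) := by
      rw [act_act, act_act]
      congr 1
      group
    rw [← h2, this]
  obtain ⟨Z, hZC, hZf, hZne, hZi⟩ := exists_finite_orbit cj
    (fun s => continuous_pi fun g => continuous_apply _)
    (fun k => by funext g; simp [cj])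
    (fun g h k => by funext a; simp only [cj]; congr 1; group) C hCc
    (by
      refine ⟨fun g => decide (g ∈ stab α x), (hmk _).2 ?_⟩
      simp only [decide_eq_true_eq]
      exact ⟨one_mem _, fun a b => mul_mem, fun a => inv_mem, hcon, x, hx.1, fun g hg => hg⟩)
    (by
      refine (hc.image fun H : Subgroup G => fun g => decide (g ∈ H)).mono ?_
      intro k hk
      obtain ⟨h1, h2, h3, h4, y, hy, hg⟩ := (hmk k).1 hk
      refine ⟨⟨⟨⟨{g | k g = true}, fun {a b} => h2 a b⟩, h1⟩, fun {a} => h3 a⟩, ?_, ?_⟩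
      · exact amenable_of_fix α M hM (hL.state y hy) _ fun n hn => hg n hn
      · funext g
        exact Bool.eq_iff_iff.2 (decide_eq_true_iff.trans Iff.rfl))
    (by
      intro s k hk
      obtain ⟨h1, h2, h3, h4, y, hy, hg⟩ := (hmk k).1 hk
      refine (hmk _).2 ⟨?_, ?_, ?_, ?_, act α s y, hL.inv s y hy, hfix s k y hg⟩
      · simpa [cj] using h1
      · intro a b ha hb
        have := h2 _ _ ha hb
        change k _ = true
        rw [← this]
        congr 1
        group
      · intro a ha
        have := h3 _ ha
        change k _ = true
        rw [← this]
        congr 1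
        group
      · intro g
        obtain ⟨f, hf, hk⟩ := h4 (s * g)
        refine ⟨f, hf, ?_⟩
        change k _ = true
        rw [← hk]
        congr 1
        group)
  have hfin : Fintype Z := hZf.fintype
  have hneZ : Nonempty Z := hZne.to_subtype
  let σ : G → Equiv.Perm Z := fun s =>
    { toFun := fun k => ⟨cj s k, hZi s k k.2⟩
      invFun := fun k => ⟨cj s⁻¹ k, hZi s⁻¹ k k.2⟩
      left_inv := fun k => by
        apply Subtype.ext
        funext g
        change (k : G → Bool) _ = (k : G → Bool) g
        congr 1
        group
      right_inv := fun k => by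
        apply Subtype.ext
        funext g
        change (k : G → Bool) _ = (k : G → Bool) g
        congr 1
        group }
  let Y : Z → Set (WeakDual ℂ B) := fun k =>
    {y | y ∈ L ∧ ∀ g, (k : G → Bool) g = true → act α g y = y}
  have hmem : ∀ k : Z, x ∈ Y k := fun k => hL.mem_of_finite hx Y (fun _ _ h => h.1)
    (fun k => by
      have : Y k = L ∩ ⋂ g, ⋂ _ : (k : G → Bool) g = true, {y | act α g y = y} := by
        ext y
        simp [Y]
      rw [this]
      exact hL.closed.inter (isClosed_iInter fun g => isClosed_iInter fun _ =>
        isClosed_eq (continuous_act α g) continuous_id))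
    (fun k => by
      obtain ⟨h1, h2, h3, h4, y, hy, hg⟩ := (hmk k).1 (hZC k.2)
      exact ⟨y, hy, hg⟩)
    (fun k => by
      rintro y₁ ⟨h₁, g₁⟩ y₂ ⟨h₂, g₂⟩ a b ha hb hab
      refine ⟨hL.cvx h₁ h₂ ha hb hab, fun g hg => ?_⟩
      have e : act α g (a • y₁ + b • y₂) = a • act α g y₁ + b • act α g y₂ := rfl
      exact e.trans (by rw [g₁ g hg, g₂ g hg]))
    σ (fun s k y hy => ⟨hL.inv s y hy.1, hfix s k y hy.2⟩) k
  obtain ⟨k0, hk0⟩ := hZne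
  obtain ⟨h1, h2, h3, h4, -⟩ := (hmk k0).1 (hZC hk0)
  obtain ⟨f, hf, hkf⟩ := h4 1
  have hbot : (stab α x).normalCore = ⊥ := hn _ inferInstance
    (amenable_of_fix α M hM (hL.state x hx.1) _ fun n hn => (stab α x).normalCore_le hn)
  have hfm : f ∈ (stab α x).normalCore := by
    intro b
    refine (hmem ⟨_, hZi b⁻¹ k0 hk0⟩).2 _ ?_
    change k0 _ = true
    rw [← hkf]
    congr 1
    group
  rw [hbot, Subgroup.mem_bot] at hfm
  exact hF (hfm ▸ hf)

end Grp

section Ops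

variable (G) in
/-- Bounded operators on `ℓ²(G)`. -/
abbrev BG : Type u := ℓ²(G, ℂ) →L[ℂ] ℓ²(G, ℂ)

theorem lreg_apply (g : G) (f : ℓ²(G, ℂ)) (h : G) : lreg g f h = f (g⁻¹ * h) := by
  unfold lreg lregE; rfl

theorem lreg_mul (g h : G) : lreg (g * h) = lreg g * lreg h := by
  ext f k
  change lreg (g * h) f k = lreg g (lreg h f) k
  rw [lreg_apply, lreg_apply, lreg_apply, mul_inv_rev, mul_assoc]

theorem lreg_one : lreg (1 : G) = 1 := by
  ext f k
  change lreg 1 f k = f k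
  rw [lreg_apply, inv_one, one_mul]

theorem lreg_star (g : G) : star (lreg g) = lreg g⁻¹ := by
  rw [ContinuousLinearMap.star_eq_adjoint, eq_comm, ContinuousLinearMap.eq_adjoint_iff]
  intro ξ η
  rw [lp.inner_eq_tsum, lp.inner_eq_tsum, ← (Equiv.mulLeft g).tsum_eq fun i =>
    inner ℂ (ξ i) (lreg g η i)]
  congr 1
  funext i
  rw [lreg_apply, lreg_apply, inv_inv]
  simp

/-- The left regular representation by unitaries. -/
def uni : G →* unitary (BG G) where
  toFun g := ⟨lreg g, by
    rw [Unitary.mem_iff, lreg_star, ← lreg_mul, ← lreg_mul, mul_inv_cancel, inv_mul_cancel,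
      lreg_one]
    exact ⟨rfl, rfl⟩⟩
  map_one' := Subtype.ext lreg_one
  map_mul' g h := Subtype.ext (lreg_mul g h)

/-- Conjugation by the left regular representation. -/
def conjA : G →* (BG G ≃⋆ₐ[ℂ] BG G) := (Unitary.conjStarAlgAut ℂ (BG G)).comp uni

theorem conjA_apply (g : G) (b : BG G) : conjA g b = lreg g * b * lreg g⁻¹ := by
  rw [← lreg_star]
  rfl

theorem lreg_mul_conj (g : G) (b : BG G) : lreg g * b = conjA g b * lreg g := by
  rw [conjA_apply, mul_assoc, ← lreg_mul, inv_mul_cancel, lreg_one, mul_one]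

theorem conjA_lreg (g s : G) : conjA g (lreg s) = lreg (g * s * g⁻¹) := by
  rw [conjA_apply, ← lreg_mul, ← lreg_mul]

theorem mul_memlp (f : lp (fun _ : G => ℂ) ∞) (ξ : ℓ²(G, ℂ)) : Memℓp (fun s => f s * ξ s) 2 := by
  have h : Memℓp (fun s => ((‖f‖ : ℂ) • ξ) s) 2 := lp.memℓp ((‖f‖ : ℂ) • ξ)
  have h' := (memℓp_gen_iff (by norm_num)).1 h
  refine memℓp_gen (h'.of_nonneg_of_le (fun s => by positivity) fun s => ?_)
  gcongr
  rw [norm_mul]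
  change _ ≤ ‖(‖f‖ : ℂ) * ξ s‖
  rw [norm_mul, Complex.norm_real, norm_norm]
  gcongr
  exact lp.norm_apply_le_norm (by simp) f s

/-- Multiplication operators. -/
def mulOp (f : lp (fun _ : G => ℂ) ∞) : BG G :=
  LinearMap.mkContinuous
    { toFun := fun ξ => ⟨fun s => f s * ξ s, mul_memlp f ξ⟩
      map_add' := fun ξ η => by
        ext s
        exact mul_add _ _ _
      map_smul' := fun c ξ => by
        ext s
        exact mul_left_comm _ _ _ } ‖f‖ (fun ξ => by
      have h : ‖(⟨fun s => f s * ξ s, mul_memlp f ξ⟩ : ℓ²(G, ℂ))‖ ≤ ‖(‖f‖ : ℂ) • ξ‖ := by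
        refine lp.norm_mono (by norm_num) fun s => ?_
        change ‖f s * ξ s‖ ≤ ‖(‖f‖ : ℂ) * ξ s‖
        rw [norm_mul, norm_mul, Complex.norm_real, norm_norm]
        gcongr
        exact lp.norm_apply_le_norm (by simp) f s
      rw [norm_smul, Complex.norm_real, norm_norm] at h
      exact h)

theorem mulOp_apply (f : lp (fun _ : G => ℂ) ∞) (ξ : ℓ²(G, ℂ)) (s : G) :
    mulOp f ξ s = f s * ξ s := rfl

theorem mulOp_star (f : lp (fun _ : G => ℂ) ∞) : mulOp (star f) = star (mulOp f) := by
  rw [ContinuousLinearMap.star_eq_adjoint, ContinuousLinearMap.eq_adjoint_iff]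
  intro ξ η
  rw [lp.inner_eq_tsum, lp.inner_eq_tsum]
  congr 1
  funext s
  rw [mulOp_apply, mulOp_apply]
  change inner ℂ (star (f s) * ξ s) (η s) = _
  simp [mul_comm, mul_left_comm, mul_assoc]

/-- Multiplication operators as a star homomorphism. -/
def mulHom : lp (fun _ : G => ℂ) ∞ →⋆ₐ[ℂ] BG G where
  toFun := mulOp
  map_one' := by
    ext ξ s
    exact one_mul _
  map_mul' f g := by
    ext ξ s
    exact mul_assoc _ _ _
  map_zero' := by
    ext ξ s
    exact zero_mul _
  map_add' f g := by
    ext ξ s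
    exact add_mul _ _ _
  commutes' c := by
    ext ξ s
    change (algebraMap ℂ (lp (fun _ : G => ℂ) ∞) c) s * ξ s = c * ξ s
    rfl
  map_star' := mulOp_star

theorem conjA_mulHom (g : G) (f : lp (fun _ : G => ℂ) ∞) :
    conjA g (mulHom f) = mulHom (shift g f) := by
  rw [conjA_apply]
  ext ξ s
  change lreg g (mulOp f (lreg g⁻¹ ξ)) s = f (g⁻¹ * s) * ξ s
  rw [lreg_apply, mulOp_apply, lreg_apply]
  simp

end Ops

section Final

theorem isClosed_redCstar : IsClosed (redCstar G : Set (BG G)) := by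
  unfold redCstar
  exact StarSubalgebra.isClosed_topologicalClosure _

theorem lreg_mem (g : G) : lreg g ∈ redCstar G := by
  unfold redCstar
  exact StarSubalgebra.le_topologicalClosure _ (StarAlgebra.subset_adjoin ℂ _ ⟨g, rfl⟩)

theorem span_mul {x y : BG G} (hx : x ∈ Submodule.span ℂ (Set.range (lreg (G := G))))
    (hy : y ∈ Submodule.span ℂ (Set.range (lreg (G := G)))) :
    x * y ∈ Submodule.span ℂ (Set.range (lreg (G := G))) := by
  have h := Submodule.mul_mem_mul hx hy
  rw [Submodule.span_mul_span] at h
  refine Submodule.span_mono ?_ h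
  rintro _ ⟨_, ⟨g, rfl⟩, _, ⟨h, rfl⟩, rfl⟩
  exact ⟨g * h, lreg_mul g h⟩

theorem adjoin_span {x : BG G} (hx : x ∈ StarAlgebra.adjoin ℂ (Set.range (lreg (G := G)))) :
    x ∈ Submodule.span ℂ (Set.range (lreg (G := G))) := by
  refine StarAlgebra.adjoin_induction
    (p := fun x _ => x ∈ Submodule.span ℂ (Set.range (lreg (G := G)))) ?_ ?_ ?_ ?_ ?_ hx
  · exact fun x h => Submodule.subset_span h
  · intro r
    rw [Algebra.algebraMap_eq_smul_one, ← lreg_one]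
    exact Submodule.smul_mem _ _ (Submodule.subset_span ⟨1, rfl⟩)
  · exact fun x y _ _ h1 h2 => Submodule.add_mem _ h1 h2
  · exact fun x y _ _ h1 h2 => span_mul h1 h2
  · intro x _ h
    refine Submodule.span_induction (p := fun x _ => star x ∈
      Submodule.span ℂ (Set.range (lreg (G := G)))) ?_ ?_ ?_ ?_ h
    · rintro _ ⟨g, rfl⟩
      rw [lreg_star]
      exact Submodule.subset_span ⟨_, rfl⟩
    · rw [star_zero]; exact Submodule.zero_mem _
    · intro x y _ _ h1 h2
      rw [star_add]; exact Submodule.add_mem _ h1 h2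
    · intro c x _ h1
      rw [star_smul]; exact Submodule.smul_mem _ _ h1

theorem exists_approx {a : BG G} (ha : a ∈ redCstar G) {ε : ℝ} (hε : 0 < ε) :
    ∃ c : G →₀ ℂ, ‖a - c.sum fun s z => z • lreg s‖ < ε := by
  unfold redCstar at ha
  have ha' : a ∈ closure (StarAlgebra.adjoin ℂ (Set.range (lreg (G := G))) : Set (BG G)) := ha
  obtain ⟨p, hp, hd⟩ := Metric.mem_closure_iff.1 ha' ε hε
  obtain ⟨c, rfl⟩ := Finsupp.mem_span_range_iff_exists_finsupp.1 (adjoin_span hp)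
  exact ⟨c, by rwa [dist_eq_norm] at hd⟩

open Classical in
/-- The point mass at `s`. -/
def dl (s : G) : ℓ²(G, ℂ) := lp.single 2 s (1 : ℂ)

theorem dl_apply (s t : G) [Decidable (t = s)] : dl s t = if t = s then 1 else 0 := by
  classical
  rw [dl, lp.single_apply, Pi.single_apply]
  congr

theorem norm_dl (s : G) : ‖dl s‖ = 1 := by
  classical
  rw [dl, lp.norm_single (by norm_num), norm_one]

theorem lreg_dl (s : G) : lreg s (dl 1) = dl s := by
  classical
  ext t
  rw [lreg_apply, dl_apply, dl_apply]
  congr 1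
  exact propext (inv_mul_eq_one.trans eq_comm)

/-- The canonical trace. -/
def tr (b : BG G) : ℂ := b (dl 1) 1

theorem tr_sub (a b : BG G) : tr (a - b) = tr a - tr b := rfl

theorem norm_tr_le (b : BG G) : ‖tr b‖ ≤ ‖b‖ := by
  refine (lp.norm_apply_le_norm (by norm_num) (b (dl 1)) 1).trans ?_
  have := b.le_opNorm (dl 1)
  rwa [norm_dl, mul_one] at this

theorem tr_star_mul (b : BG G) : tr (star b * b) = (‖b (dl 1)‖ ^ 2 : ℝ) := by
  classical
  have h : ∀ ξ : ℓ²(G, ℂ), ξ 1 = inner ℂ (dl (1 : G)) ξ := fun ξ => by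
    rw [dl, lp.inner_single_left]
    simp
  rw [tr, h]
  change inner ℂ (dl 1) ((star b) (b (dl 1))) = _
  rw [ContinuousLinearMap.star_eq_adjoint, ContinuousLinearMap.adjoint_inner_right,
    inner_self_eq_norm_sq_to_K]
  push_cast
  rfl

theorem eq_zero_of_dl {b : BG G} (h : ∀ s, b (dl s) = 0) : b = 0 := by
  classical
  apply ContinuousLinearMap.ext
  intro ξ
  have h1 := (lp.hasSum_single (by norm_num) ξ).mapL b
  have h2 : (fun s => b (lp.single 2 s (ξ s))) = fun _ => 0 := by
    funext s
    have : lp.single 2 s (ξ s) = ξ s • dl s := by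
      ext t
      change lp.single (E := fun _ : G => ℂ) 2 s (ξ s) t = ξ s * dl s t
      rw [dl_apply, lp.single_apply, Pi.single_apply]
      simp
    rw [this, map_smul, h, smul_zero]
  rw [h2] at h1
  exact h1.unique hasSum_zero

/-- A two-sided ideal, as a subspace of the bounded operators. -/
def idealSub (I : TwoSidedIdeal (redCstar G)) : Submodule ℂ (BG G) where
  carrier := {b | ∃ a ∈ I, (a : BG G) = b}
  add_mem' := by
    rintro _ _ ⟨a, ha, rfl⟩ ⟨b, hb, rfl⟩
    exact ⟨a + b, I.add_mem ha hb, rfl⟩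
  zero_mem' := ⟨0, I.zero_mem, rfl⟩
  smul_mem' := by
    rintro c _ ⟨a, ha, rfl⟩
    refine ⟨(c • (1 : redCstar G)) * a, I.mul_mem_left _ _ ha, ?_⟩
    rw [smul_mul_assoc, one_mul]
    rfl

theorem norm_one_sub_ge (I : TwoSidedIdeal (redCstar G)) (hI : I ≠ ⊤) (a : redCstar G)
    (ha : a ∈ I) : 1 ≤ ‖1 - a‖ := by
  by_contra! hlt
  apply hI
  have : CompleteSpace (redCstar G) := isClosed_redCstar.completeSpace_coe
  have hu := isUnit_one_sub_of_norm_lt_one hlt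
  rw [sub_sub_cancel] at hu
  obtain ⟨v, hv⟩ := hu
  have h1 : (1 : redCstar G) ∈ I := by
    have := I.mul_mem_left (↑v⁻¹ : redCstar G) a ha
    rwa [← hv, Units.inv_mul] at this
  rw [eq_top_iff]
  intro b _
  have := I.mul_mem_left b 1 h1
  rwa [mul_one] at this

theorem exists_state (I : TwoSidedIdeal (redCstar G)) (hI : I ≠ ⊤) :
    ∃ φ : WeakDual ℂ (BG G), IsState φ ∧ ∀ a ∈ I, φ (a : BG G) = 0 := by
  let Q := BG G ⧸ idealSub I
  let o : Q := Submodule.Quotient.mk 1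
  have hone : ‖(1 : BG G)‖ ≤ 1 := ContinuousLinearMap.norm_id_le
  have ho : ‖o‖ = 1 := by
    refine le_antisymm ((Submodule.Quotient.norm_mk_le _ _).trans hone) ?_
    by_contra! hlt
    obtain ⟨m, hm, hm1⟩ := QuotientAddGroup.norm_lt_iff.1 hlt
    have hm' : (Submodule.Quotient.mk m : Q) = Submodule.Quotient.mk 1 := hm
    rw [Submodule.Quotient.eq] at hm'
    have h2 := (idealSub I).neg_mem hm'
    rw [neg_sub] at h2
    obtain ⟨a, ha, hae⟩ := h2
    have h3 := norm_one_sub_ge I hI a ha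
    have h4 : ‖1 - a‖ = ‖m‖ := by
      change ‖(1 : BG G) - (a : BG G)‖ = ‖m‖
      rw [hae, sub_sub_cancel]
    linarith
  obtain ⟨f, hf, hfo⟩ := exists_dual_vector ℂ o (by rw [ho]; norm_num)
  have hb : ∀ a : BG G, ‖f (Submodule.Quotient.mk a)‖ ≤ ‖a‖ := fun a => by
    refine (f.le_opNorm _).trans ?_
    rw [hf, one_mul]
    exact Submodule.Quotient.norm_mk_le _ _
  let φ : WeakDual ℂ (BG G) := StrongDual.toWeakDual (LinearMap.mkContinuous
    ((f : Q →ₗ[ℂ] ℂ).comp (idealSub I).mkQ) 1 (fun a => by rw [one_mul]; exact hb a))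
  have hφ : ∀ a, φ a = f (Submodule.Quotient.mk a) := fun a => rfl
  refine ⟨φ, isState_of_norm_le φ ?_ hb, fun a ha => ?_⟩
  · rw [hφ]
    change f o = 1
    rw [hfo, ho]
    rfl
  · have hm : (a : BG G) ∈ idealSub I := ⟨a, ha, rfl⟩
    rw [hφ, (Submodule.Quotient.mk_eq_zero _).2 hm, map_zero]

theorem main_simple
    (hc : {H : Subgroup G | IsAmenable H}.Countable)
    (hn : ∀ N : Subgroup G, N.Normal → IsAmenable N → N = ⊥)
    (I : TwoSidedIdeal (redCstar G)) (hI : I ≠ ⊤) : I = ⊥ := by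
  classical
  let S : Set (WeakDual ℂ (BG G)) := {φ | IsState φ ∧ ∀ a ∈ I, φ (a : BG G) = 0}
  have hSc : IsClosed S := by
    have : S = {φ | IsState φ} ∩ ⋂ a : redCstar G, ⋂ _ : a ∈ I, {φ | φ (a : BG G) = 0} := by
      ext φ
      simp [S]
    rw [this]
    exact isClosed_isState.inter (isClosed_iInter fun a => isClosed_iInter fun _ =>
      isClosed_eq (WeakDual.eval_continuous _) continuous_const)
  have hSne : S.Nonempty := exists_state I hI
  have hSst : ∀ y ∈ S, IsState y := fun y hy => hy.1
  have hScv : Convex ℝ S := by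
    rintro y₁ ⟨h₁, g₁⟩ y₂ ⟨h₂, g₂⟩ a b ha hb hab
    have e : ∀ z, (a • y₁ + b • y₂ : WeakDual ℂ (BG G)) z = (a : ℂ) * y₁ z + (b : ℂ) * y₂ z :=
      fun z => by
        change a • y₁ z + b • y₂ z = _
        rw [Complex.real_smul, Complex.real_smul]
    refine ⟨⟨(e 1).trans ?_, fun z hz => ?_⟩, fun z hz => (e z).trans ?_⟩
    · rw [h₁.1, h₂.1, mul_one, mul_one, ← Complex.ofReal_add, hab, Complex.ofReal_one]
    · have h0 : (0 : ℂ) ≤ (a : ℂ) * y₁ z + (b : ℂ) * y₂ z :=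
        add_nonneg (mul_nonneg (Complex.zero_le_real.2 ha) (h₁.2 z hz))
          (mul_nonneg (Complex.zero_le_real.2 hb) (h₂.2 z hz))
      exact h0.trans_eq (e z).symm
    · rw [g₁ z hz, g₂ z hz, mul_zero, mul_zero, add_zero]
  have hSinv : ∀ g : G, ∀ y ∈ S, act conjA g y ∈ S := by
    rintro g y ⟨h1, h2⟩
    refine ⟨h1.act conjA g, fun a ha => ?_⟩
    rw [act_apply, conjA_apply]
    exact h2 (⟨lreg g, lreg_mem g⟩ * a * ⟨lreg g⁻¹, lreg_mem g⁻¹⟩)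
      (I.mul_mem_right _ _ (I.mul_mem_left _ _ ha))
  obtain ⟨L, hLS, hL⟩ := exists_isMinSet conjA S hSc hSne hSst hScv hSinv
  obtain ⟨x, hx⟩ : (L.extremePoints ℝ).Nonempty :=
    @IsCompact.extremePoints_nonempty (WeakDual ℂ (BG G)) _ _ _ _ _ _ weakDual_lc L
      hL.compact hL.ne
  obtain ⟨φ, hφS, hφx⟩ := hL.exists_conv mulHom conjA_mulHom hSc hSne hSst hScv hSinv hx.1 hx.1
  have hφ := hφS.1
  have htr : ∀ a ∈ I, tr (a : BG G) = 0 := by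
    intro a ha
    by_contra hne
    have hpos : 0 < ‖tr (a : BG G)‖ := norm_pos_iff.2 hne
    obtain ⟨c, hcn⟩ := exists_approx a.2 (half_pos hpos)
    obtain ⟨g, hg⟩ := group_step mulHom hL conjA_mulHom hx hc hn (c.support.erase 1) (by simp)
    let p : BG G := c.sum fun s z => z • lreg s
    have hp1 : ∀ s, s ∈ c.support → act conjA g φ (lreg s) = tr (lreg s) := by
      intro s hs
      rw [act_apply, conjA_lreg, tr, lreg_dl, dl_apply]
      by_cases h : 1 = s
      · subst h
        rw [if_pos rfl, mul_one, mul_inv_cancel, lreg_one, hφ.1]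
      · rw [if_neg h]
        by_contra hcon
        exact hg s (Finset.mem_erase.2 ⟨fun h' => h h'.symm, hs⟩)
          (ext_fix mulHom hL conjA_mulHom hx hx.1 hφ hφx _ (lreg (g * s * g⁻¹))
            (lreg_mul_conj _) hcon)
    have hp2 : act conjA g φ p = tr p := by
      have e : tr p = ∑ s ∈ c.support, c s * tr (lreg s) := by
        let trL : BG G →ₗ[ℂ] ℂ :=
          { toFun := tr, map_add' := fun _ _ => rfl, map_smul' := fun _ _ => rfl }
        change trL (∑ s ∈ c.support, c s • lreg s) = _
        rw [map_sum]
        rfl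
      rw [e]
      change act conjA g φ (∑ s ∈ c.support, c s • lreg s) = _
      rw [map_sum]
      refine Finset.sum_congr rfl fun s hs => ?_
      rw [map_smul, hp1 s hs, smul_eq_mul]
    have hψ := hSinv g φ hφS
    have h1 := hψ.1.norm_le ((a : BG G) - p)
    rw [map_sub, hψ.2 a ha, hp2, zero_sub, norm_neg] at h1
    have h2 := norm_tr_le ((a : BG G) - p)
    rw [tr_sub] at h2
    have h3 := norm_add_le (tr (a : BG G) - tr p) (tr p)
    rw [sub_add_cancel] at h3
    have h4 : ‖(a : BG G) - p‖ < ‖tr (a : BG G)‖ / 2 := hcn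
    linarith
  rw [eq_bot_iff]
  intro a ha
  rw [TwoSidedIdeal.mem_bot]
  apply Subtype.ext
  apply eq_zero_of_dl
  intro s
  let b : redCstar G := a * ⟨lreg s, lreg_mem s⟩
  have hb : star b * b ∈ I := I.mul_mem_left _ _ (I.mul_mem_right _ _ ha)
  have h1 := htr _ hb
  change tr (star (b : BG G) * (b : BG G)) = 0 at h1
  rw [tr_star_mul] at h1
  have h2 : ‖(b : BG G) (dl 1)‖ = 0 := by
    have := Complex.ofReal_eq_zero.1 h1
    exact pow_eq_zero_iff (two_ne_zero) |>.1 this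
  have h3 := norm_eq_zero.1 h2
  change (a : BG G) (lreg s (dl 1)) = 0 at h3
  rwa [lreg_dl] at h3

end Final

/-- A discrete group with only countably many amenable subgroups and no non-trivial normal
amenable subgroups is C*-simple. -/
theorem cstarSimple_of_countably_many_amenable_subgroups (G : Type u) [Group G]
    (hc : {H : Subgroup G | IsAmenable H}.Countable)
    (hn : ∀ N : Subgroup G, N.Normal → IsAmenable N → N = ⊥) :
    IsCstarSimple G := by
  intro I _
  by_cases hI : I = ⊤
  · exact Or.inr hI
  · exact Or.inl (main_simple hc hn I hI)
end
end

section
/- Let G be a discrete group and let X be a uniformly recurrent subgroup of G that is countable as a set. Then X is finite, X equals the set {gHg⁻¹ : g ∈ G} of conjugates of any of its members H, and for every H ∈ X the normalizer N_G(H) has finite index in G. -/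
noncomputable section
open scoped ENNReal ComplexOrder
open MeasureTheory
set_option maxHeartbeats 1000000
set_option synthInstance.maxHeartbeats 1000000

universe u

variable {G : Type u} [Group G]

variable (G) in
/-- The Chabauty topology on the space of subgroups of `G`: the topology induced from the
product topology on `{0,1}^G` by identifying a subgroup with its indicator function. -/
def chabauty : TopologicalSpace (Subgroup G) :=
  letI : ∀ p : Prop, Decidable p := Classical.propDecidable
  TopologicalSpace.induced (fun (H : Subgroup G) (g : G) => decide (g ∈ H))
    (inferInstance : TopologicalSpace (G → Bool))

attribute [instance] chabauty

/-- The conjugate subgroup `gHg⁻¹`. -/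
def conjSub (g : G) (H : Subgroup G) : Subgroup G :=
  H.map (MulAut.conj g).toMonoidHom

variable (G) in
/-- A uniformly recurrent subgroup of `G`: a nonempty, Chabauty-closed, conjugation-invariant
and minimal (all orbits are dense) collection of subgroups of `G`. -/
def IsURS (X : Set (Subgroup G)) : Prop :=
  X.Nonempty ∧ IsClosed X ∧ (∀ (g : G), ∀ H ∈ X, conjSub g H ∈ X) ∧
    ∀ H ∈ X, ∀ K ∈ X, K ∈ closure {L : Subgroup G | ∃ g : G, L = conjSub g H}

lemma mem_conjSub_iff {G : Type u} [Group G] (g x : G) (H : Subgroup G) :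
    x ∈ conjSub g H ↔ g⁻¹ * x * g ∈ H := by
  unfold conjSub
  rw [Subgroup.mem_map]
  constructor
  · rintro ⟨y, hy, rfl⟩
    simpa [mul_assoc] using hy
  · intro h
    exact ⟨_, h, by simp [mul_assoc]⟩

lemma conjSub_conjSub {G : Type u} [Group G] (a b : G) (H : Subgroup G) :
    conjSub a (conjSub b H) = conjSub (a * b) H := by
  ext x
  simp [mem_conjSub_iff, mul_assoc]

lemma conjSub_one {G : Type u} [Group G] (H : Subgroup G) :
    conjSub 1 H = H := by
  ext x
  simp [mem_conjSub_iff]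

open Classical in
/-- The indicator map. -/
def indMap (G : Type u) [Group G] (H : Subgroup G) (g : G) : Bool := decide (g ∈ H)

lemma indMap_inducing (G : Type u) [Group G] : Topology.IsInducing (indMap G) := by
  constructor
  unfold chabauty indMap
  congr

lemma indMap_injective (G : Type u) [Group G] : Function.Injective (indMap G) := by
  intro H K h
  ext x
  have := congrFun h x
  simpa [indMap] using this

lemma indMap_range (G : Type u) [Group G] : Set.range (indMap G) =
    {f : G → Bool | f 1 = true} ∩
      ((⋂ a : G, ⋂ b : G, {f : G → Bool | (!(f a) || !(f b) || f (a * b)) = true}) ∩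
      ⋂ a : G, {f : G → Bool | (!(f a) || f a⁻¹) = true}) := by
  ext f
  simp only [Set.mem_range, Set.mem_inter_iff, Set.mem_iInter, Set.mem_setOf_eq]
  constructor
  · rintro ⟨H, rfl⟩
    refine ⟨by simp [indMap, H.one_mem], ?_, ?_⟩
    · intro a b
      by_cases ha : a ∈ H <;> by_cases hb : b ∈ H <;> simp [indMap, ha, hb]
      exact H.mul_mem ha hb
    · intro a
      by_cases ha : a ∈ H <;> simp [indMap, ha]
  · rintro ⟨h1, h2, h3⟩
    refine ⟨{ carrier := {x | f x = true}, one_mem' := h1, mul_mem' := ?_, inv_mem' := ?_ }, ?_⟩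
    · intro a b ha hb
      have := h2 a b
      simp only [Set.mem_setOf_eq] at ha hb ⊢
      simpa [ha, hb] using this
    · intro a ha
      have := h3 a
      simp only [Set.mem_setOf_eq] at ha ⊢
      simpa [ha] using this
    · ext x
      rw [Bool.eq_iff_iff]
      exact (@decide_eq_true_iff _ (Classical.propDecidable _)).trans Iff.rfl

lemma isClosed_bool_pred {Y : Type*} [TopologicalSpace Y] {p : Y → Bool} (hp : Continuous p) :
    IsClosed {y | p y = true} :=
  isClosed_eq hp continuous_const

lemma indMap_closedEmbedding (G : Type u) [Group G] :
    Topology.IsClosedEmbedding (indMap G) := by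
  refine ⟨⟨indMap_inducing G, indMap_injective G⟩, ?_⟩
  rw [indMap_range]
  have hor : Continuous (fun p : Bool × Bool => (p.1 || p.2)) := continuous_of_discreteTopology
  have hnot : Continuous (fun p : Bool => !p) := continuous_of_discreteTopology
  refine (isClosed_bool_pred (continuous_apply _)).inter (IsClosed.inter ?_ ?_)
  · refine isClosed_iInter fun a => isClosed_iInter fun b => isClosed_bool_pred ?_
    exact hor.comp ((hor.comp ((hnot.comp (continuous_apply a)).prodMk
      (hnot.comp (continuous_apply b)))).prodMk (continuous_apply (a * b)))
  · refine isClosed_iInter fun a => isClosed_bool_pred ?_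
    exact hor.comp ((hnot.comp (continuous_apply a)).prodMk (continuous_apply a⁻¹))

lemma continuous_conjSub {G : Type u} [Group G] (g : G) :
    Continuous (conjSub g : Subgroup G → Subgroup G) := by
  rw [(indMap_inducing G).continuous_iff]
  refine continuous_pi fun x => ?_
  have : (fun H : Subgroup G => (indMap G ∘ conjSub g) H x)
      = fun H => indMap G H (g⁻¹ * x * g) := by
    funext H
    simp [indMap, mem_conjSub_iff]
  rw [this]
  exact (continuous_apply _).comp (indMap_inducing G).continuous

/-- A uniformly recurrent subgroup that is countable as a set is finite, consists exactly of
the conjugates of any of its members, and the normalizer of each of its members has finite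
index. -/
theorem urs_countable_structure (G : Type u) [Group G] (X : Set (Subgroup G))
    (hX : IsURS G X) (hc : X.Countable) :
    X.Finite ∧ (∀ H ∈ X, X = {K : Subgroup G | ∃ g : G, K = conjSub g H}) ∧
      ∀ H ∈ X, (Subgroup.normalizer (H : Set G)).index ≠ 0 := by
  obtain ⟨hne, hcl, hinv, hmin⟩ := hX
  have : CompactSpace (Subgroup G) := (indMap_closedEmbedding G).compactSpace
  have : T2Space (Subgroup G) := (indMap_closedEmbedding G).isEmbedding.t2Space
  have hcomp : IsCompact X := hcl.isCompact
  have : CompactSpace X := isCompact_iff_compactSpace.mp hcomp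
  have : Countable X := hc.to_subtype
  have : Nonempty X := hne.to_subtype
  obtain ⟨H0, U, hU, hUX⟩ : ∃ H0 : X, ∃ U : Set (Subgroup G), IsOpen U ∧
      ∀ K : X, (K : Subgroup G) ∈ U ↔ K = H0 := by
    obtain ⟨i, hi⟩ := nonempty_interior_of_iUnion_of_closed (X := X) (f := fun x : X => {x})
      (fun i => isClosed_singleton) (by ext; simp)
    have ho : IsOpen ({i} : Set X) := by
      rw [← interior_eq_iff_isOpen]
      exact (Set.Nonempty.subset_singleton_iff hi).mp interior_subset
    obtain ⟨U, hU, hUi⟩ := isOpen_induced_iff.mp ho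
    exact ⟨i, U, hU, fun K => by
      have := congrArg (K ∈ ·) hUi
      simpa using this⟩
  have hto : ∀ H ∈ X, ∃ g : G, conjSub g H = H0 := by
    intro H hH
    obtain ⟨L, hLU, g, rfl⟩ := mem_closure_iff.mp (hmin H hH H0 H0.2) U hU ((hUX H0).mpr rfl)
    exact ⟨g, congrArg Subtype.val ((hUX ⟨_, hinv g H hH⟩).mp hLU)⟩
  have hfin : X.Finite := by
    have : DiscreteTopology X := by
      refine discreteTopology_iff_isOpen_singleton.mpr fun H => ?_
      obtain ⟨g, hg⟩ := hto H H.2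
      refine isOpen_induced_iff.mpr ⟨conjSub g ⁻¹' U, hU.preimage (continuous_conjSub g), ?_⟩
      ext K
      simp only [Set.mem_preimage, Set.mem_singleton_iff]
      rw [hUX ⟨_, hinv g K K.2⟩, Subtype.ext_iff, Subtype.ext_iff]
      change conjSub g K = H0 ↔ _
      rw [← hg]
      constructor
      · intro h
        have := congrArg (conjSub g⁻¹) h
        simpa [conjSub_conjSub, conjSub_one] using this
      · intro h
        rw [h]
    exact Set.finite_coe_iff.mp finite_of_compact_of_discrete
  refine ⟨hfin, ?_, ?_⟩
  · intro H hH
    ext K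
    constructor
    · intro hK
      obtain ⟨a, ha⟩ := hto H hH
      obtain ⟨b, hb⟩ := hto K hK
      refine ⟨b⁻¹ * a, ?_⟩
      rw [← conjSub_conjSub, ha, ← hb, conjSub_conjSub, inv_mul_cancel, conjSub_one]
    · rintro ⟨g, rfl⟩
      exact hinv g H hH
  · intro H hH
    have : Finite X := hfin.to_subtype
    have : Finite (G ⧸ Subgroup.normalizer (H : Set G)) := by
      refine Finite.of_injective (β := X) (fun q => ⟨conjSub q.out H, hinv _ H hH⟩) ?_
      intro p q hpq
      have h1 : conjSub p.out H = conjSub q.out H := congrArg Subtype.val hpq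
      rw [← p.out_eq', ← q.out_eq']
      refine QuotientGroup.eq.mpr ?_
      have h2 : conjSub (p.out⁻¹ * q.out) H = H := by
        rw [← conjSub_conjSub, ← h1, conjSub_conjSub, inv_mul_cancel, conjSub_one]
      rw [← inv_mem_iff, Subgroup.mem_normalizer_iff]
      intro x
      have h3 := mem_conjSub_iff (p.out⁻¹ * q.out) x H
      rw [h2] at h3
      rw [inv_inv]
      exact h3
    exact Subgroup.index_ne_zero_of_finite
end
end

section
/- Let G be a discrete group and H ≤ G a subgroup. The following are equivalent: (1) H is recurrent; (2) for every net (g_i) in G there is a subnet (g_j) such that the intersection over j of g_j H g_j⁻¹ is not the trivial subgroup {e}; (3) there exists a finite subset F ⊆ G ∖ {e} such that F ∩ gHg⁻¹ ≠ ∅ for every g ∈ G; (4) there exists a finite subset F ⊆ G ∖ {e} such that F ∩ K ≠ ∅ for every subgroup K in the Chabauty closure of {gHg⁻¹ : g ∈ G}. -/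
noncomputable section
open scoped ENNReal ComplexOrder
open MeasureTheory
set_option maxHeartbeats 1000000
set_option synthInstance.maxHeartbeats 1000000

universe u

variable {G : Type u} [Group G]

/-- `H` is a recurrent subgroup of `G`: the trivial subgroup does not belong to the Chabauty
closure of the set of conjugates of `H`. -/
def IsRecurrent (H : Subgroup G) : Prop :=
  (⊥ : Subgroup G) ∉ closure {K : Subgroup G | ∃ g : G, K = conjSub g H}

lemma isClopen_mem_aux {G : Type u} [Group G] (s : G) : IsClopen {K : Subgroup G | s ∈ K} := by
  classical
  have hc : Continuous (fun (H : Subgroup G) (g : G) =>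
      @decide (g ∈ H) (Classical.propDecidable _)) := continuous_induced_dom
  have h1 := (continuous_apply s).comp hc
  have h2 := (isClopen_discrete ({true} : Set Bool)).preimage h1
  convert h2 using 1
  ext K
  simp

/-- Characterizations of recurrent subgroups: recurrence; every net of conjugates has a
subnet with non-trivial intersection; some finite set `F ⊆ G \ {e}` meets every conjugate;
some finite set `F ⊆ G \ {e}` meets every Chabauty-limit of conjugates. -/
theorem isRecurrent_tfae (G : Type u) [Group G] (H : Subgroup G) :
    List.TFAE
      [ IsRecurrent H,
        ∀ (ι : Type u) [Preorder ι] [IsDirected ι (· ≤ ·)] [Nonempty ι] (gi : ι → G),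
          ∃ (κ : Type u) (_ : Preorder κ), IsDirected κ (· ≤ ·) ∧ Nonempty κ ∧
            ∃ θ : κ → ι, Monotone θ ∧ (∀ i : ι, ∃ j : κ, i ≤ θ j) ∧
              (⨅ j : κ, conjSub (gi (θ j)) H) ≠ ⊥,
        ∃ F : Finset G, (1 : G) ∉ F ∧ ∀ g : G, ∃ s ∈ F, s ∈ conjSub g H,
        ∃ F : Finset G, (1 : G) ∉ F ∧
          ∀ K ∈ closure {L : Subgroup G | ∃ g : G, L = conjSub g H}, ∃ s ∈ F, s ∈ K ] := by
  classical
  tfae_have 3 → 4 := by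
    rintro ⟨F, h1, hF⟩
    refine ⟨F, h1, ?_⟩
    have hcl : IsClosed (⋃ s ∈ F, {K : Subgroup G | s ∈ K}) :=
      F.finite_toSet.isClosed_biUnion fun s _ => (isClopen_mem_aux s).1
    have hsub : {L : Subgroup G | ∃ g : G, L = conjSub g H} ⊆ ⋃ s ∈ F, {K : Subgroup G | s ∈ K} := by
      rintro _ ⟨g, rfl⟩
      simpa using hF g
    intro K hK
    simpa using closure_minimal hsub hcl hK
  tfae_have 4 → 1 := by
    rintro ⟨F, h1, hF⟩ hbot
    obtain ⟨s, hs, hs'⟩ := hF _ hbot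
    rw [Subgroup.mem_bot] at hs'
    exact h1 (hs' ▸ hs)
  tfae_have 1 → 3 := by
    intro h
    by_contra hcon
    push Not at hcon
    apply h
    rw [mem_closure_iff]
    intro o ho hbo
    obtain ⟨t, ht, rfl⟩ := isOpen_induced_iff.1 ho
    obtain ⟨I, u, hu, hsub⟩ := isOpen_pi_iff.1 ht _ hbo
    obtain ⟨g, hg⟩ := hcon (I.erase 1) (by simp)
    refine ⟨conjSub g H, hsub ?_, g, rfl⟩
    intro a ha
    have hm : a ∈ conjSub g H ↔ a ∈ (⊥ : Subgroup G) := by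
      by_cases h1 : a = 1
      · subst h1
        simp [one_mem]
      · have := hg a (Finset.mem_erase.2 ⟨h1, ha⟩)
        simp [this, h1]
    have := (hu a ha).2
    simpa [hm] using this
  tfae_have 3 → 2 := by
    rintro ⟨F, h1, hF⟩ ι _ _ _ gi
    have key : ∃ s ∈ F, ∀ i, ∃ j, i ≤ j ∧ s ∈ conjSub (gi j) H := by
      by_contra hcon
      push Not at hcon
      choose! f hf using hcon
      obtain ⟨M, hM⟩ := (F.image f).exists_le
      obtain ⟨s, hs, hs'⟩ := hF (gi M)
      exact hf s hs M (hM _ (Finset.mem_image_of_mem f hs)) hs'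
    obtain ⟨s, hs, hcof⟩ := key
    refine ⟨{j : ι // s ∈ conjSub (gi j) H}, inferInstance, ⟨?_⟩, ?_, Subtype.val,
      fun _ _ h => h, ?_, ?_⟩
    · intro a b
      obtain ⟨c, hac, hbc⟩ := exists_ge_ge a.1 b.1
      obtain ⟨j, hj, hj'⟩ := hcof c
      exact ⟨⟨j, hj'⟩, hac.trans hj, hbc.trans hj⟩
    · obtain ⟨j, _, hj'⟩ := hcof (Classical.arbitrary ι)
      exact ⟨⟨j, hj'⟩⟩
    · intro i
      obtain ⟨j, hj, hj'⟩ := hcof i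
      exact ⟨⟨j, hj'⟩, hj⟩
    · intro hb
      have : s ∈ (⨅ j : {j : ι // s ∈ conjSub (gi j) H}, conjSub (gi j.1) H) :=
        Subgroup.mem_iInf.2 fun j => j.2
      rw [hb, Subgroup.mem_bot] at this
      exact h1 (this ▸ hs)
  tfae_have 2 → 3 := by
    intro h
    by_contra hcon
    push Not at hcon
    have hg : ∀ F : Finset G, ∃ g : G, ∀ s ∈ F, s ≠ 1 → s ∉ conjSub g H := by
      intro F
      obtain ⟨g, hg⟩ := hcon (F.erase 1) (by simp)
      exact ⟨g, fun s hs h1 => hg s (Finset.mem_erase.2 ⟨h1, hs⟩)⟩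
    choose g hg using hg
    obtain ⟨κ, _, _, _, θ, _, hcof, hne⟩ := h (Finset G) g
    apply hne
    rw [Subgroup.eq_bot_iff_forall]
    intro s hs
    by_contra h1
    obtain ⟨j, hj⟩ := hcof {s}
    exact hg (θ j) s (hj (Finset.mem_singleton_self s)) h1 (Subgroup.mem_iInf.1 hs j)
  tfae_finish
end
end
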